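/- arXiv:1601.03467 — 3 statements merged into one kernel-verified Lean document; each statement's English description precedes it below -/
import Mathlib

section
/- The function s ↦ A(s)/s^2 extends to a smooth function on R, and there exist positive constants c_1, c_2 such that c_1 ≤ A(s)/s^2 ≤ c_2 for all s ∈ (0,4]. -/
noncomputable def gammaN (n : ℕ) : ℝ :=
  (∫ u in (0:ℝ)..1, (1 - u ^ 2) ^ (((n : ℝ) - 1) / 2))⁻¹

noncomputable def Afun (n : ℕ) (s : ℝ) : ℝ :=
  2 * gammaN n *
    ∫ u in (0:ℝ)..1, (1 - u ^ 2) ^ (((n : ℝ) - 1) / 2) * (Real.sin (u * s / 2)) ^ 2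

/-!
Since `sin x = x * sinc x`, the factor `s ^ 2` leaves the integral `A(s)`, and the quotient
`A(s) / s ^ 2` is a weighted average of `sinc (u * s / 2) ^ 2` over `u ∈ [0, 1]`. An average
`∫ w(u) f(u * s) du` of dilates of a smooth function is smooth in `s`, because differentiating it
in `s` gives another one, with weight `w(u) * u` and function `f'`. The function `sinc` is itself
such an average, `sinc x = ∫ cos (u * x) du` over `[0, 1]`. Finally, the average is positive for
every `s`, because `sinc` does not vanish near `0`, and a positive continuous function is pinched
between positive constants on compact sets.
-/

open MeasureTheory Set

section DilationAverage

variable {E : Type*} [NormedAddCommGroup E]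

theorem exists_norm_comp_mul_le {f : ℝ → E} {K L : Set ℝ} (hf : Continuous f)
    (hK : IsCompact K) (hL : IsCompact L) : ∃ C, ∀ u ∈ K, ∀ s ∈ L, ‖f (u * s)‖ ≤ C := by
  obtain ⟨C, hC⟩ := (hK.prod hL).exists_bound_of_continuousOn
    (f := fun p : ℝ × ℝ => f (p.1 * p.2)) (by fun_prop)
  exact ⟨C, fun u hu s hs => hC (u, s) ⟨hu, hs⟩⟩

variable [NormedSpace ℝ E] {μ : Measure ℝ} {a b : ℝ} {w : ℝ → ℝ} {f : ℝ → E}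

theorem intervalIntegrable_smul_comp_mul (hw : IntervalIntegrable w μ a b) (hf : Continuous f)
    (s : ℝ) : IntervalIntegrable (fun u => w u • f (u * s)) μ a b :=
  hw.smul_continuousOn (by fun_prop)

theorem continuous_integral_smul_comp_mul (hw : IntervalIntegrable w μ a b) (hf : Continuous f) :
    Continuous fun s => ∫ u in a..b, w u • f (u * s) ∂μ := by
  refine continuous_iff_continuousAt.2 fun s₀ => ?_
  obtain ⟨C, hC⟩ :=
    exists_norm_comp_mul_le hf (isCompact_uIcc (a := a) (b := b)) (isCompact_closedBall s₀ 1)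
  refine intervalIntegral.continuousAt_of_dominated_interval (bound := fun u => ‖w u‖ * C)
    (.of_forall fun s => (intervalIntegrable_smul_comp_mul hw hf s).def'.aestronglyMeasurable)
    ?_ (hw.norm.mul_const C) (.of_forall fun u _ => by fun_prop)
  filter_upwards [Metric.closedBall_mem_nhds s₀ one_pos] with s hs
  filter_upwards with u hu
  rw [norm_smul]
  gcongr
  exact hC u (uIoc_subset_uIcc hu) s hs

theorem hasDerivAt_integral_smul_comp_mul (hw : IntervalIntegrable w μ a b)
    (hf : ContDiff ℝ 1 f) (s₀ : ℝ) :
    HasDerivAt (fun s => ∫ u in a..b, w u • f (u * s) ∂μ)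
      (∫ u in a..b, (w u * u) • deriv f (u * s₀) ∂μ) s₀ := by
  have hwu : IntervalIntegrable (fun u => w u * u) μ a b := hw.mul_continuousOn continuousOn_id
  have hf' : Continuous (deriv f) := hf.continuous_deriv le_rfl
  obtain ⟨C, hC⟩ :=
    exists_norm_comp_mul_le hf' (isCompact_uIcc (a := a) (b := b)) (isCompact_closedBall s₀ 1)
  refine (intervalIntegral.hasDerivAt_integral_of_dominated_loc_of_deriv_le
    (F' := fun s u => (w u * u) • deriv f (u * s)) (bound := fun u => ‖w u * u‖ * C)
    (Metric.closedBall_mem_nhds s₀ one_pos)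
    (.of_forall fun s =>
      (intervalIntegrable_smul_comp_mul hw hf.continuous s).def'.aestronglyMeasurable)
    (intervalIntegrable_smul_comp_mul hw hf.continuous s₀)
    (intervalIntegrable_smul_comp_mul hwu hf' s₀).def'.aestronglyMeasurable
    (.of_forall fun u hu s hs => ?_) (hwu.norm.mul_const C) (.of_forall fun u _ s _ => ?_)).2
  · rw [norm_smul]
    gcongr
    exact hC u (uIoc_subset_uIcc hu) s hs
  · have hdiff : HasDerivAt f (deriv f (u * s)) (u * s) :=
      (hf.differentiable one_ne_zero _).hasDerivAt
    have hmul : HasDerivAt (fun s => u * s) u s := by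
      simpa using (hasDerivAt_id s).const_mul u
    rw [mul_smul]
    exact (hdiff.scomp s hmul).const_smul (w u)

theorem contDiff_integral_smul_comp_mul {n : ℕ∞} (hw : IntervalIntegrable w μ a b)
    (hf : ContDiff ℝ n f) : ContDiff ℝ n fun s => ∫ u in a..b, w u • f (u * s) ∂μ := by
  rw [contDiff_iff_forall_nat_le]
  intro k hk
  replace hf : ContDiff ℝ k f := hf.of_le (mod_cast hk)
  clear hk
  induction k generalizing w f with
  | zero =>
    rw [Nat.cast_zero, contDiff_zero]
    exact continuous_integral_smul_comp_mul hw hf.continuous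
  | succ k ih =>
    have hderiv := hasDerivAt_integral_smul_comp_mul hw (hf.of_le (by simp))
    push_cast at hf ⊢
    rw [contDiff_succ_iff_deriv] at hf ⊢
    refine ⟨fun s => (hderiv s).differentiableAt, by simp, ?_⟩
    rw [deriv_eq hderiv]
    exact ih (hw.mul_continuousOn continuousOn_id) hf.2.2

end DilationAverage

theorem integral_mul_comp_mul_pos {b : ℝ} {w f : ℝ → ℝ} (hb : 0 < b)
    (hw : IntervalIntegrable w volume 0 b) (hw_pos : ∀ u ∈ Ioo 0 b, 0 < w u)
    (hf : Continuous f) (hf_nonneg : ∀ x, 0 ≤ f x) (hf_zero : 0 < f 0) (s : ℝ) :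
    0 < ∫ u in (0 : ℝ)..b, w u * f (u * s) := by
  have hnonneg : 0 ≤ᵐ[volume.restrict (uIoc 0 b)] fun u => w u * f (u * s) := by
    rw [uIoc_of_le hb.le, ← Measure.restrict_congr_set Ioo_ae_eq_Ioc]
    filter_upwards [ae_restrict_mem measurableSet_Ioo] with u hu
    exact mul_nonneg (hw_pos u hu).le (hf_nonneg _)
  rw [intervalIntegral.integral_pos_iff_support_of_nonneg_ae' hnonneg
    (intervalIntegrable_smul_comp_mul hw hf s)]
  have hopen : IsOpen {u | 0 < f (u * s)} := isOpen_lt continuous_const (by fun_prop)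
  have hnear : ({u | 0 < f (u * s)} ∩ Ioo 0 b).Nonempty := by
    have h0 : (0 : ℝ) ∈ closure (Ioo 0 b) := by
      rw [closure_Ioo hb.ne]
      exact left_mem_Icc.2 hb.le
    exact mem_closure_iff.1 h0 _ hopen (by simpa using hf_zero)
  refine ⟨hb, ((hopen.inter isOpen_Ioo).measure_pos volume hnear).trans_le (measure_mono ?_)⟩
  exact fun u hu => ⟨(mul_pos (hw_pos u hu.2) hu.1).ne', Ioo_subset_Ioc_self hu.2⟩

theorem exists_pos_bounds_of_isCompact {X : Type*} [TopologicalSpace X] {K : Set X} {f : X → ℝ}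
    (hK : IsCompact K) (hf : ContinuousOn f K) (hpos : ∀ x ∈ K, 0 < f x) :
    ∃ c₁ c₂ : ℝ, 0 < c₁ ∧ 0 < c₂ ∧ ∀ x ∈ K, c₁ ≤ f x ∧ f x ≤ c₂ := by
  obtain ⟨c₁, hc₁, hlower⟩ := hK.exists_forall_le' hf hpos
  obtain ⟨C, hupper⟩ := hK.exists_bound_of_continuousOn hf
  refine ⟨c₁, max C 1, hc₁, by positivity, fun x hx => ⟨hlower x hx, ?_⟩⟩
  exact (le_abs_self _).trans ((hupper x hx).trans (le_max_left _ _))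

theorem sinc_mul_eq_sin (x : ℝ) : Real.sinc x * x = Real.sin x := by
  rcases eq_or_ne x 0 with rfl | hx
  · simp
  · rw [Real.sinc_of_ne_zero hx, div_mul_cancel₀ _ hx]

theorem integral_cos_mul_eq_sinc (x : ℝ) :
    ∫ u in (0 : ℝ)..1, Real.cos (u * x) = Real.sinc x := by
  rcases eq_or_ne x 0 with rfl | hx
  · simp
  · simp [intervalIntegral.integral_comp_mul_right _ hx, Real.sinc_of_ne_zero hx, div_eq_inv_mul]

theorem contDiff_sinc {n : ℕ∞} : ContDiff ℝ n Real.sinc := by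
  have h := contDiff_integral_smul_comp_mul (n := n) (a := 0) (b := 1) (w := fun _ => 1)
    (μ := volume) intervalIntegrable_const Real.contDiff_cos
  simpa only [one_smul, integral_cos_mul_eq_sinc] using h

theorem intervalIntegrable_one_sub_sq_rpow {p : ℝ} (hp : -1 < p) :
    IntervalIntegrable (fun u : ℝ => (1 - u ^ 2) ^ p) volume 0 1 := by
  have hsub : IntervalIntegrable (fun u : ℝ => (1 - u) ^ p) volume 0 1 := by
    simpa using
      (intervalIntegral.intervalIntegrable_rpow' (a := 1) (b := 0) hp).comp_sub_left 1
  have hadd : ContinuousOn (fun u : ℝ => (1 + u) ^ p) (uIcc 0 1) := by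
    rw [uIcc_of_le zero_le_one]
    exact .rpow_const (by fun_prop) fun u hu => .inl (by linarith [hu.1])
  refine (hsub.mul_continuousOn hadd).congr fun u hu => ?_
  rw [uIoc_of_le zero_le_one] at hu
  rw [← Real.mul_rpow (by linarith [hu.2]) (by linarith [hu.1])]
  ring_nf

theorem one_sub_sq_rpow_pos {u : ℝ} (hu : u ∈ Ioo 0 1) (p : ℝ) : 0 < (1 - u ^ 2) ^ p :=
  Real.rpow_pos_of_pos (by nlinarith [hu.1, hu.2]) p

theorem neg_one_lt_natCast_sub_one_div_two (n : ℕ) : (-1 : ℝ) < ((n : ℝ) - 1) / 2 := by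
  linarith [n.cast_nonneg (α := ℝ)]

theorem gammaN_pos (n : ℕ) : 0 < gammaN n :=
  inv_pos.2 <| intervalIntegral.intervalIntegral_pos_of_pos_on
    (intervalIntegrable_one_sub_sq_rpow (neg_one_lt_natCast_sub_one_div_two n))
    (fun _ hu => one_sub_sq_rpow_pos hu _) one_pos

/-- The smooth extension of `s ↦ A(s) / s ^ 2` across `s = 0`, obtained by writing
`sin (u * s / 2) ^ 2 = (u * s / 2) ^ 2 * sinc (u * s / 2) ^ 2` in the integral defining `A(s)`. -/
noncomputable def afunDivSq (n : ℕ) (s : ℝ) : ℝ :=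
  gammaN n / 2 *
    ∫ u in (0 : ℝ)..1,
      ((1 - u ^ 2) ^ (((n : ℝ) - 1) / 2) * u ^ 2) * Real.sinc (u * s / 2) ^ 2

theorem afunDivSq_mul_sq (n : ℕ) (s : ℝ) : afunDivSq n s * s ^ 2 = Afun n s := by
  simp only [afunDivSq, Afun, mul_assoc, ← intervalIntegral.integral_mul_const,
    ← intervalIntegral.integral_const_mul]
  refine intervalIntegral.integral_congr fun u _ => ?_
  rw [← sinc_mul_eq_sin]
  ring

theorem afunDivSq_eq_div (n : ℕ) {s : ℝ} (hs : s ≠ 0) : afunDivSq n s = Afun n s / s ^ 2 :=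
  eq_div_of_mul_eq (pow_ne_zero 2 hs) (afunDivSq_mul_sq n s)

theorem intervalIntegrable_one_sub_sq_rpow_mul_sq (n : ℕ) :
    IntervalIntegrable (fun u : ℝ => (1 - u ^ 2) ^ (((n : ℝ) - 1) / 2) * u ^ 2) volume 0 1 :=
  (intervalIntegrable_one_sub_sq_rpow (neg_one_lt_natCast_sub_one_div_two n)).mul_continuousOn
    (by fun_prop)

theorem contDiff_afunDivSq (n : ℕ) {m : ℕ∞} : ContDiff ℝ m (afunDivSq n) := by
  have hsinc : ContDiff ℝ m fun x : ℝ => Real.sinc (x / 2) ^ 2 :=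
    (contDiff_sinc.comp (contDiff_id.div_const 2)).pow 2
  exact contDiff_const.mul
    (contDiff_integral_smul_comp_mul (intervalIntegrable_one_sub_sq_rpow_mul_sq n) hsinc)

theorem afunDivSq_pos (n : ℕ) (s : ℝ) : 0 < afunDivSq n s :=
  mul_pos (half_pos (gammaN_pos n)) <|
    integral_mul_comp_mul_pos (f := fun x => Real.sinc (x / 2) ^ 2) one_pos
      (intervalIntegrable_one_sub_sq_rpow_mul_sq n)
      (fun _ hu => mul_pos (one_sub_sq_rpow_pos hu _) (pow_pos hu.1 2))
      (by fun_prop) (fun _ => sq_nonneg _) (by simp) s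

theorem Afun_div_sq_smooth_and_bounded_general (n : ℕ) (R : ℝ) :
    (∃ B : ℝ → ℝ, ContDiff ℝ (⊤ : ℕ∞) B ∧ ∀ s : ℝ, s ≠ 0 → B s = Afun n s / s ^ 2) ∧
      ∃ c₁ c₂ : ℝ, 0 < c₁ ∧ 0 < c₂ ∧
        ∀ s ∈ Set.Ioc (0 : ℝ) R, c₁ ≤ Afun n s / s ^ 2 ∧ Afun n s / s ^ 2 ≤ c₂ := by
  have hsmooth : ContDiff ℝ (⊤ : ℕ∞) (afunDivSq n) := contDiff_afunDivSq n
  obtain ⟨c₁, c₂, hc₁, hc₂, hbounds⟩ := exists_pos_bounds_of_isCompact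
    (isCompact_Icc (a := 0) (b := R)) hsmooth.continuous.continuousOn fun s _ => afunDivSq_pos n s
  refine ⟨⟨afunDivSq n, hsmooth, fun s => afunDivSq_eq_div n⟩, c₁, c₂, hc₁, hc₂, fun s hs => ?_⟩
  rw [← afunDivSq_eq_div n hs.1.ne']
  exact hbounds s (Ioc_subset_Icc_self hs)

/-- `s ↦ A(s)/s²` extends to a smooth function on `ℝ`, and there are positive
constants `c₁, c₂` with `c₁ ≤ A(s)/s² ≤ c₂` for all `s ∈ (0, 4]`. -/
theorem Afun_div_sq_smooth_and_bounded (n : ℕ) (hn : 1 ≤ n) :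
    (∃ B : ℝ → ℝ, ContDiff ℝ (⊤ : ℕ∞) B ∧ ∀ s : ℝ, s ≠ 0 → B s = Afun n s / s ^ 2) ∧
      ∃ c₁ c₂ : ℝ, 0 < c₁ ∧ 0 < c₂ ∧
        ∀ s ∈ Set.Ioc (0 : ℝ) 4, c₁ ≤ Afun n s / s ^ 2 ∧ Afun n s / s ^ 2 ≤ c₂ :=
  Afun_div_sq_smooth_and_bounded_general n 4
end

section
/- Let p, q ∈ (1,∞) with p ≥ q, and λ ∈ (1,∞). Then there exists a constant C such that ‖G_λ^*(F)‖_{L^p(R^n)} ≤ C ‖G(F)‖_{L^p(R^n)} for all nonnegative measurable functions F on R^n × (0,∞), where G(F)(x) := (∫_0^1 |F(x,t)|^q dt/t)^{1/q} and G_λ^*(F)(x) := (∫_0^1 ∫_{R^n} |F(y,t)|^q (t/(t+|x-y|))^{λn} dy dt/t^{n+1})^{1/q}. -/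
open MeasureTheory Metric
open scoped ENNReal

/-- The Littlewood–Paley type `g`-functional `G(F)(x) = (∫_0^1 F(x,t)^q dt/t)^{1/q}`. -/
noncomputable def GFn (n : ℕ) (q : ℝ)
    (F : EuclideanSpace ℝ (Fin n) → ℝ → ℝ≥0∞) (x : EuclideanSpace ℝ (Fin n)) : ℝ≥0∞ :=
  (∫⁻ t in Set.Ioo (0:ℝ) 1, F x t ^ q * ENNReal.ofReal t⁻¹) ^ (1 / q)

/-- The `g_λ^*` functional. -/
noncomputable def GlambdaFn (n : ℕ) (q lam : ℝ)
    (F : EuclideanSpace ℝ (Fin n) → ℝ → ℝ≥0∞) (x : EuclideanSpace ℝ (Fin n)) : ℝ≥0∞ :=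
  (∫⁻ t in Set.Ioo (0:ℝ) 1,
      (∫⁻ y, F y t ^ q * ENNReal.ofReal ((t / (t + dist x y)) ^ (lam * n)) ∂volume) *
        ENNReal.ofReal (t ^ (-(n : ℝ) - 1))) ^ (1 / q)

/-- The `L^p` "norm" `(∫ h^p)^{1/p}` of an `ℝ≥0∞`-valued function. -/
noncomputable def Np (n : ℕ) (p : ℝ) (h : EuclideanSpace ℝ (Fin n) → ℝ≥0∞) : ℝ≥0∞ :=
  (∫⁻ x, h x ^ p ∂volume) ^ (1 / p)

/-!
Put `r = p / q ≥ 1`, `u = G_λ^*(F) ^ q` and `v = G(F) ^ q`. By Tonelli, integrating `u` against a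
test function `h` moves the kernel `t⁻ⁿ (t / (t + |x - y|)) ^ (λ n)` from `F` to `h`. Splitting this
kernel over the dyadic annuli `|x - y| ∼ 2 ^ j t` bounds the resulting averages of `h` by its
Hardy–Littlewood maximal function, since `λ > 1` makes the geometric series converge. Hence
`∫ h u ≤ C ∫ v M h`. For `r = 1` take `h = 1`. For `r > 1` Hölder's inequality and the boundedness
of `M` on `L^s`, with `s` conjugate to `r`, give `∫ h u ≤ C' ‖v‖_r ‖h‖_s` for all `h`, which by
duality is `‖u‖_r ≤ C' ‖v‖_r`.
-/

open Set Filter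
open scoped NNReal

section LayerCake

variable {α : Type*} {mα : MeasurableSpace α} {μ : Measure α}

lemma setLIntegral_Ioi_ofReal_rpow_eq_top (s : ℝ) :
    ∫⁻ t in Ioi (0 : ℝ), ENNReal.ofReal (t ^ s) = ∞ := by
  have hnonneg : 0 ≤ᵐ[volume.restrict (Ioi (0 : ℝ))] fun t => t ^ s :=
    (ae_restrict_mem measurableSet_Ioi).mono fun t ht => Real.rpow_nonneg (le_of_lt ht) s
  have hmeas : Measurable fun t : ℝ => t ^ s := by fun_prop
  by_contra hne
  exact not_integrableOn_Ioi_rpow s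
    ((lintegral_ofReal_ne_top_iff_integrable hmeas.aestronglyMeasurable hnonneg).1 hne)

lemma lintegral_rpow_eq_lintegral_meas_ofReal_lt_mul {f : α → ℝ≥0∞} (hf : AEMeasurable f μ)
    {p : ℝ} (hp : 0 < p) :
    ∫⁻ x, f x ^ p ∂μ = ENNReal.ofReal p *
      ∫⁻ t in Ioi (0 : ℝ), μ {x | ENNReal.ofReal t < f x} * ENNReal.ofReal (t ^ (p - 1)) := by
  by_cases hfin : ∀ᵐ x ∂μ, f x ≠ ∞
  · calc ∫⁻ x, f x ^ p ∂μ = ∫⁻ x, ENNReal.ofReal ((f x).toReal ^ p) ∂μ := by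
          refine lintegral_congr_ae (hfin.mono fun x hx => ?_)
          dsimp only
          rw [← ENNReal.ofReal_rpow_of_nonneg ENNReal.toReal_nonneg hp.le, ENNReal.ofReal_toReal hx]
      _ = _ := lintegral_rpow_eq_lintegral_meas_lt_mul μ
          (Eventually.of_forall fun x => ENNReal.toReal_nonneg) hf.ennreal_toReal hp
      _ = _ := by
          congr 1
          refine setLIntegral_congr_fun measurableSet_Ioi fun t ht => ?_
          have hlevel : {x | t < (f x).toReal} =ᵐ[μ] {x | ENNReal.ofReal t < f x} :=
            hfin.mono fun x hx =>
              propext (ENNReal.ofReal_lt_iff_lt_toReal (le_of_lt ht) hx).symm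
          simp only [measure_congr hlevel]
  · have hpos : μ {x | f x = ∞} ≠ 0 := by simpa [ae_iff] using hfin
    have hleft : ∫⁻ x, f x ^ p ∂μ = ∞ :=
      lintegral_eq_top_of_measure_eq_top_ne_zero (hf.pow_const p)
        (by simpa only [ENNReal.rpow_eq_top_iff_of_pos hp] using hpos)
    have hright : ∞ ≤ ∫⁻ t in Ioi (0 : ℝ),
        μ {x | ENNReal.ofReal t < f x} * ENNReal.ofReal (t ^ (p - 1)) := by
      calc ∞ = ∫⁻ t in Ioi (0 : ℝ), μ {x | f x = ∞} * ENNReal.ofReal (t ^ (p - 1)) := by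
            rw [lintegral_const_mul _ (by fun_prop), setLIntegral_Ioi_ofReal_rpow_eq_top,
              ENNReal.mul_top hpos]
        _ ≤ _ := by
            gcongr with t x
            intro hx
            exact hx ▸ ENNReal.ofReal_lt_top
    rw [hleft, top_le_iff.1 hright, ENNReal.mul_top (ENNReal.ofReal_pos.2 hp).ne']

lemma lintegral_rpow_sub_one_withDensity_self {f : α → ℝ≥0∞} (hf : Measurable f) {p : ℝ}
    (hp : 1 ≤ p) : ∫⁻ x, f x ^ (p - 1) ∂μ.withDensity f = ∫⁻ x, f x ^ p ∂μ := by
  rw [lintegral_withDensity_eq_lintegral_mul _ hf (hf.pow_const _)]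
  refine lintegral_congr fun x => ?_
  calc f x * f x ^ (p - 1) = f x ^ (1 + (p - 1)) := by
        rw [ENNReal.rpow_add_of_nonneg _ _ zero_le_one (sub_nonneg.2 hp), ENNReal.rpow_one]
    _ = f x ^ p := by rw [add_sub_cancel]

/-- The layer cake formula is applied to `g` under `μ` and to `f` under `μ.withDensity f`. -/
lemma lintegral_rpow_le_of_mul_measure_lt_le {f g : α → ℝ≥0∞} (hf : Measurable f)
    (hg : AEMeasurable g μ) {A : ℝ≥0} {p : ℝ} (hp : 1 < p)
    (hfg : ∀ a : ℝ≥0∞, a * μ {x | a < g x} ≤ A * ∫⁻ x in {x | a < f x}, f x ∂μ) :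
    ∫⁻ x, g x ^ p ∂μ ≤ ENNReal.ofReal (p / (p - 1)) * A * ∫⁻ x, f x ^ p ∂μ := by
  have hp1 : 0 < p - 1 := sub_pos.2 hp
  have hweak : ∀ t ∈ Ioi (0 : ℝ),
      μ {x | ENNReal.ofReal t < g x} * ENNReal.ofReal (t ^ (p - 1)) ≤
        A * (μ.withDensity f {x | ENNReal.ofReal t < f x} * ENNReal.ofReal (t ^ (p - 1 - 1))) := by
    intro t (ht : 0 < t)
    have hsplit : ENNReal.ofReal (t ^ (p - 1)) =
        ENNReal.ofReal t * ENNReal.ofReal (t ^ (p - 1 - 1)) := by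
      rw [← ENNReal.ofReal_mul ht.le, Real.rpow_sub_one ht.ne' (p - 1), mul_div_cancel₀ _ ht.ne']
    rw [withDensity_apply _ (measurableSet_lt measurable_const hf), hsplit, ← mul_assoc,
      ← mul_assoc, mul_comm (μ _)]
    gcongr ?_ * _
    exact hfg _
  have hp_eq : ENNReal.ofReal p = ENNReal.ofReal (p / (p - 1)) * ENNReal.ofReal (p - 1) := by
    rw [← ENNReal.ofReal_mul (by positivity), div_mul_cancel₀ _ hp1.ne']
  calc ∫⁻ x, g x ^ p ∂μ
      = ENNReal.ofReal p * ∫⁻ t in Ioi (0 : ℝ),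
          μ {x | ENNReal.ofReal t < g x} * ENNReal.ofReal (t ^ (p - 1)) :=
        lintegral_rpow_eq_lintegral_meas_ofReal_lt_mul hg (by positivity)
    _ ≤ ENNReal.ofReal p * ∫⁻ t in Ioi (0 : ℝ), A *
          (μ.withDensity f {x | ENNReal.ofReal t < f x} * ENNReal.ofReal (t ^ (p - 1 - 1))) := by
        gcongr 1
        exact setLIntegral_mono' measurableSet_Ioi hweak
    _ = ENNReal.ofReal (p / (p - 1)) * A * (ENNReal.ofReal (p - 1) * ∫⁻ t in Ioi (0 : ℝ),
          μ.withDensity f {x | ENNReal.ofReal t < f x} * ENNReal.ofReal (t ^ (p - 1 - 1))) := by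
        rw [lintegral_const_mul' _ _ ENNReal.coe_ne_top, hp_eq]
        ring
    _ = ENNReal.ofReal (p / (p - 1)) * A * ∫⁻ x, f x ^ p ∂μ := by
        rw [← lintegral_rpow_eq_lintegral_meas_ofReal_lt_mul hf.aemeasurable hp1,
          lintegral_rpow_sub_one_withDensity_self hf hp.le]

end LayerCake

section Duality

variable {α : Type*} {mα : MeasurableSpace α} {μ : Measure α} [SigmaFinite μ]

lemma lintegral_le_of_forall_simpleFunc_le {f : α → ℝ≥0∞} {B : ℝ≥0∞}
    (hB : ∀ g : SimpleFunc α ℝ≥0, (∀ x, g x ≤ f x) → ∫⁻ x, g x ∂μ < ∞ → ∫⁻ x, g x ∂μ ≤ B) :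
    ∫⁻ x, f x ∂μ ≤ B := by
  rw [lintegral_eq_nnreal]
  refine iSup₂_le fun φ hφ => le_of_forall_lt fun L hL => ?_
  rw [← SimpleFunc.lintegral_eq_lintegral, SimpleFunc.coe_map] at hL
  obtain ⟨g, hgφ, hgfin, hLg⟩ := φ.exists_lt_lintegral_simpleFunc_of_lt_lintegral hL
  exact hLg.trans_le (hB g (fun x => (ENNReal.coe_le_coe.2 (hgφ x)).trans (hφ x)) hgfin)

lemma le_rpow_of_le_mul_rpow_inv {a B : ℝ≥0∞} {r s : ℝ} (hrs : r.HolderConjugate s)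
    (ha : a ≠ ∞) (hB : a ≤ B * a ^ s⁻¹) : a ≤ B ^ r := by
  rcases eq_or_ne a 0 with rfl | ha0
  · exact zero_le
  have hpos : a ^ s⁻¹ ≠ 0 := (ENNReal.rpow_pos (pos_iff_ne_zero.2 ha0) ha).ne'
  have hfin : a ^ s⁻¹ ≠ ∞ := ENNReal.rpow_ne_top_of_nonneg hrs.symm.inv_nonneg ha
  rw [← ENNReal.rpow_inv_le_iff hrs.pos, ← ENNReal.mul_le_mul_iff_left hpos hfin,
    ← ENNReal.rpow_add _ _ ha0 ha, hrs.inv_add_inv_eq_one, ENNReal.rpow_one]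
  exact hB

/-- For a simple function `g ≤ u ^ r` of finite integral, the test function `h = g ^ (1 / s)` gives
`∫ g ≤ B (∫ g) ^ (1 / s)`, and finiteness of `∫ g` allows division. -/
lemma lintegral_rpow_le_of_forall_lintegral_mul_le {u : α → ℝ≥0∞} {r s : ℝ}
    (hrs : r.HolderConjugate s) {B : ℝ≥0∞}
    (hB : ∀ h : α → ℝ≥0∞, Measurable h →
      ∫⁻ x, h x * u x ∂μ ≤ B * (∫⁻ x, h x ^ s ∂μ) ^ s⁻¹) :
    ∫⁻ x, u x ^ r ∂μ ≤ B ^ r := by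
  refine lintegral_le_of_forall_simpleFunc_le fun g hgu hgfin =>
    le_rpow_of_le_mul_rpow_inv hrs hgfin.ne ?_
  calc ∫⁻ x, g x ∂μ ≤ ∫⁻ x, (g x : ℝ≥0∞) ^ s⁻¹ * u x ∂μ := by
        refine lintegral_mono fun x => ?_
        calc (g x : ℝ≥0∞) = (g x : ℝ≥0∞) ^ s⁻¹ * (g x : ℝ≥0∞) ^ r⁻¹ := by
              rw [← ENNReal.rpow_add_of_nonneg _ _ hrs.symm.inv_nonneg hrs.inv_nonneg,
                hrs.symm.inv_add_inv_eq_one, ENNReal.rpow_one]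
          _ ≤ (g x : ℝ≥0∞) ^ s⁻¹ * u x := by
              gcongr
              exact (ENNReal.rpow_inv_le_iff hrs.pos).2 (hgu x)
    _ ≤ B * (∫⁻ x, ((g x : ℝ≥0∞) ^ s⁻¹) ^ s ∂μ) ^ s⁻¹ :=
        hB _ (g.measurable.coe_nnreal_ennreal.pow_const _)
    _ = B * (∫⁻ x, g x ∂μ) ^ s⁻¹ := by
        simp only [ENNReal.rpow_inv_rpow hrs.symm.ne_zero]

lemma lintegral_rpow_le_of_forall_lintegral_mul_le_lintegral_mul {u v : α → ℝ≥0∞} {r s : ℝ}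
    (hrs : r.HolderConjugate s) {M : (α → ℝ≥0∞) → α → ℝ≥0∞} {C K : ℝ≥0∞}
    (hMmeas : ∀ h, Measurable h → AEMeasurable (M h) μ)
    (hM : ∀ h, Measurable h → ∫⁻ x, M h x ^ s ∂μ ≤ K * ∫⁻ x, h x ^ s ∂μ)
    (hv : AEMeasurable v μ)
    (huv : ∀ h, Measurable h → ∫⁻ x, h x * u x ∂μ ≤ C * ∫⁻ x, v x * M h x ∂μ) :
    ∫⁻ x, u x ^ r ∂μ ≤ (C * K ^ s⁻¹) ^ r * ∫⁻ x, v x ^ r ∂μ := by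
  have hs : 0 ≤ s⁻¹ := hrs.symm.inv_nonneg
  calc ∫⁻ x, u x ^ r ∂μ ≤ (C * K ^ s⁻¹ * (∫⁻ x, v x ^ r ∂μ) ^ r⁻¹) ^ r := by
        refine lintegral_rpow_le_of_forall_lintegral_mul_le hrs fun h hh => ?_
        calc ∫⁻ x, h x * u x ∂μ ≤ C * ∫⁻ x, v x * M h x ∂μ := huv h hh
          _ ≤ C * ((∫⁻ x, v x ^ r ∂μ) ^ r⁻¹ * (∫⁻ x, M h x ^ s ∂μ) ^ s⁻¹) := by
              gcongr
              simpa only [one_div, Pi.mul_apply] using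
                ENNReal.lintegral_mul_le_Lp_mul_Lq μ hrs hv (hMmeas h hh)
          _ ≤ C * ((∫⁻ x, v x ^ r ∂μ) ^ r⁻¹ * (K * ∫⁻ x, h x ^ s ∂μ) ^ s⁻¹) := by
              gcongr
              exact hM h hh
          _ = C * K ^ s⁻¹ * (∫⁻ x, v x ^ r ∂μ) ^ r⁻¹ * (∫⁻ x, h x ^ s ∂μ) ^ s⁻¹ := by
              rw [ENNReal.mul_rpow_of_nonneg _ _ hs]
              ring
    _ = (C * K ^ s⁻¹) ^ r * ∫⁻ x, v x ^ r ∂μ := by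
        rw [ENNReal.mul_rpow_of_nonneg _ _ hrs.nonneg, ENNReal.rpow_inv_rpow hrs.ne_zero]

end Duality

section MaximalFunction

lemma setLAverage_const_le {α : Type*} {mα : MeasurableSpace α} {μ : Measure α} (s : Set α)
    (a : ℝ≥0∞) : ⨍⁻ _ in s, a ∂μ ≤ a := by
  rw [setLAverage_eq, setLIntegral_const]
  exact ENNReal.div_le_of_le_mul le_rfl

lemma exists_finset_pairwiseDisjoint_ball_subset_biUnion_closedBall {ι X : Type*}
    [PseudoMetricSpace X] {K : Set X} (hK : IsCompact K) {c : ι → X} {r : ι → ℝ}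
    (hKcover : K ⊆ ⋃ i, ball (c i) (r i)) :
    ∃ u : Finset ι, (u : Set ι).PairwiseDisjoint (fun i => ball (c i) (r i)) ∧
      K ⊆ ⋃ i ∈ u, closedBall (c i) (5 * r i) := by
  obtain ⟨T, hKT⟩ := hK.elim_finite_subcover _ (fun _ => isOpen_ball) hKcover
  obtain ⟨R, hR⟩ := (T.finite_toSet.image r).bddAbove
  obtain ⟨u, huT, hdisj, hcover⟩ := Vitali.exists_disjoint_subfamily_covering_enlargement_closedBall
    (T : Set ι) c r R (fun i hi => hR ⟨i, hi, rfl⟩) 5 (by norm_num)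
  lift u to Finset ι using T.finite_toSet.subset huT
  refine ⟨u, hdisj.mono fun _ => ball_subset_closedBall, fun x hx => ?_⟩
  obtain ⟨i, hi, hxi⟩ := mem_iUnion₂.1 (hKT hx)
  obtain ⟨k, hk, hik⟩ := hcover i hi
  exact mem_iUnion₂.2 ⟨k, hk, hik (ball_subset_closedBall hxi)⟩

variable {X : Type*} [PseudoMetricSpace X] [MeasurableSpace X] {μ : Measure X}

/-- The uncentered Hardy–Littlewood maximal function of `f` with respect to `μ`. -/
noncomputable def maximalFunction (μ : Measure X) (f : X → ℝ≥0∞) (x : X) : ℝ≥0∞ :=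
  ⨆ (c : X) (r : ℝ) (_ : x ∈ ball c r), ⨍⁻ y in ball c r, f y ∂μ

lemma lt_maximalFunction_iff {f : X → ℝ≥0∞} {a : ℝ≥0∞} {x : X} :
    a < maximalFunction μ f x ↔ ∃ c r, x ∈ ball c r ∧ a < ⨍⁻ y in ball c r, f y ∂μ := by
  simp only [maximalFunction, lt_iSup_iff, exists_prop]

lemma setLAverage_ball_le_maximalFunction (f : X → ℝ≥0∞) {c x : X} {r : ℝ} (hx : x ∈ ball c r) :
    ⨍⁻ y in ball c r, f y ∂μ ≤ maximalFunction μ f x :=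
  le_iSup_of_le c <| le_iSup_of_le r <| le_iSup_of_le hx le_rfl

lemma setLIntegral_ball_le_measure_mul_maximalFunction [ProperSpace X]
    [IsFiniteMeasureOnCompacts μ] (f : X → ℝ≥0∞) {c x : X} {r : ℝ} (hx : x ∈ ball c r) :
    ∫⁻ y in ball c r, f y ∂μ ≤ μ (ball c r) * maximalFunction μ f x := by
  rw [← measure_mul_setLAverage _ measure_ball_lt_top.ne]
  gcongr
  exact setLAverage_ball_le_maximalFunction f hx

lemma maximalFunction_const_le (a : ℝ≥0∞) (x : X) : maximalFunction μ (fun _ => a) x ≤ a :=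
  iSup₂_le fun _ _ => iSup_le fun _ => setLAverage_const_le _ a

lemma isOpen_setOf_lt_maximalFunction (f : X → ℝ≥0∞) (a : ℝ≥0∞) :
    IsOpen {x | a < maximalFunction μ f x} := by
  refine isOpen_iff_mem_nhds.2 fun x hx => ?_
  obtain ⟨c, r, hxr, ha⟩ := lt_maximalFunction_iff.1 hx
  filter_upwards [isOpen_ball.mem_nhds hxr] with y hy
  exact lt_maximalFunction_iff.2 ⟨c, r, hy, ha⟩

lemma measurable_maximalFunction [OpensMeasurableSpace X] (f : X → ℝ≥0∞) :
    Measurable (maximalFunction μ f) :=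
  measurable_of_Ioi fun a => (isOpen_setOf_lt_maximalFunction f a).measurableSet

lemma maximalFunction_le_maximalFunction_indicator_add {f : X → ℝ≥0∞} (a : ℝ≥0∞) (x : X) :
    maximalFunction μ f x ≤ maximalFunction μ ({y | a < f y}.indicator f) x + a := by
  refine iSup₂_le fun c r => iSup_le fun hx => ?_
  calc ⨍⁻ y in ball c r, f y ∂μ
      ≤ ⨍⁻ y in ball c r, ({y | a < f y}.indicator f y + a) ∂μ := by
        refine laverage_mono_ae (Eventually.of_forall fun y => ?_)
        by_cases hy : a < f y
        · simp only [indicator_of_mem (show y ∈ {y | a < f y} from hy), le_self_add]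
        · exact (not_lt.1 hy).trans le_add_self
    _ = ⨍⁻ y in ball c r, {y | a < f y}.indicator f y ∂μ + ⨍⁻ _ in ball c r, a ∂μ :=
        lintegral_add_right _ measurable_const
    _ ≤ maximalFunction μ ({y | a < f y}.indicator f) x + a :=
        add_le_add (setLAverage_ball_le_maximalFunction _ hx) (setLAverage_const_le _ a)

variable [BorelSpace X] [μ.Regular] {A : ℝ≥0}

lemma mul_measure_lt_maximalFunction_le
    (hA : ∀ c r, 0 < r → μ (closedBall c (5 * r)) ≤ A * μ (ball c r)) (f : X → ℝ≥0∞) (a : ℝ≥0∞) :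
    a * μ {x | a < maximalFunction μ f x} ≤ A * ∫⁻ x, f x ∂μ := by
  rw [(isOpen_setOf_lt_maximalFunction f a).measure_eq_iSup_isCompact]
  simp only [ENNReal.mul_iSup]
  refine iSup₂_le fun K hKlt => iSup_le fun hK => ?_
  let ι := {b : X × ℝ // 0 < b.2 ∧ a < ⨍⁻ y in ball b.1 b.2, f y ∂μ}
  have hKcover : K ⊆ ⋃ b : ι, ball b.1.1 b.1.2 := fun x hx => by
    obtain ⟨c, r, hxr, ha⟩ := lt_maximalFunction_iff.1 (hKlt hx)
    exact mem_iUnion.2 ⟨⟨(c, r), pos_of_mem_ball hxr, ha⟩, hxr⟩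
  obtain ⟨u, hdisj, hKu⟩ :=
    exists_finset_pairwiseDisjoint_ball_subset_biUnion_closedBall hK hKcover
  have hball : ∀ b : ι,
      a * μ (closedBall b.1.1 (5 * b.1.2)) ≤ A * ∫⁻ y in ball b.1.1 b.1.2, f y ∂μ := by
    rintro ⟨⟨c, r⟩, hr, hlt⟩
    calc a * μ (closedBall c (5 * r)) ≤ a * (A * μ (ball c r)) := by
          gcongr
          exact hA c r hr
      _ = A * (a * μ (ball c r)) := by ring
      _ ≤ A * ∫⁻ y in ball c r, f y ∂μ := by
          gcongr
          exact ENNReal.mul_le_of_le_div (setLAverage_eq μ f _ ▸ hlt.le)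
  calc a * μ K ≤ a * ∑ b ∈ u, μ (closedBall b.1.1 (5 * b.1.2)) := by
        gcongr
        exact (measure_mono hKu).trans (measure_biUnion_finset_le u _)
    _ ≤ ∑ b ∈ u, A * ∫⁻ y in ball b.1.1 b.1.2, f y ∂μ := by
        rw [Finset.mul_sum]
        exact Finset.sum_le_sum fun b _ => hball b
    _ = A * ∫⁻ y in ⋃ b ∈ u, ball b.1.1 b.1.2, f y ∂μ := by
        rw [← Finset.mul_sum, lintegral_biUnion_finset hdisj fun _ _ => measurableSet_ball]
    _ ≤ A * ∫⁻ x, f x ∂μ := by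
        gcongr
        exact Measure.restrict_le_self

lemma mul_measure_lt_maximalFunction_div_two_le
    (hA : ∀ c r, 0 < r → μ (closedBall c (5 * r)) ≤ A * μ (ball c r)) {f : X → ℝ≥0∞}
    (hf : Measurable f) (a : ℝ≥0∞) :
    a * μ {x | a < maximalFunction μ f x / 2} ≤ A * ∫⁻ x in {x | a < f x}, f x ∂μ := by
  rw [← lintegral_indicator (measurableSet_lt measurable_const hf)]
  refine le_trans ?_ (mul_measure_lt_maximalFunction_le hA _ a)
  gcongr a * μ ?_
  intro x (hx : a < maximalFunction μ f x / 2)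
  by_contra hle
  refine hx.not_ge (ENNReal.div_le_of_le_mul ?_)
  calc maximalFunction μ f x ≤ maximalFunction μ ({y | a < f y}.indicator f) x + a :=
        maximalFunction_le_maximalFunction_indicator_add a x
    _ ≤ a + a := by
        gcongr
        exact not_lt.1 hle
    _ = a * 2 := (mul_two a).symm

lemma lintegral_maximalFunction_rpow_le
    (hA : ∀ c r, 0 < r → μ (closedBall c (5 * r)) ≤ A * μ (ball c r)) {f : X → ℝ≥0∞}
    (hf : Measurable f) {s : ℝ} (hs : 1 < s) :
    ∫⁻ x, maximalFunction μ f x ^ s ∂μ ≤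
      2 ^ s * (ENNReal.ofReal (s / (s - 1)) * A) * ∫⁻ x, f x ^ s ∂μ := by
  have hs0 : 0 ≤ s := by linarith
  have hdouble : ∀ x, maximalFunction μ f x ^ s = 2 ^ s * (maximalFunction μ f x / 2) ^ s :=
    fun x => by
      rw [← ENNReal.mul_rpow_of_nonneg _ _ hs0,
        ENNReal.mul_div_cancel two_ne_zero ENNReal.ofNat_ne_top]
  simp only [hdouble]
  rw [lintegral_const_mul' _ _ (by finiteness), mul_assoc]
  gcongr
  exact lintegral_rpow_le_of_mul_measure_lt_le hf
    ((measurable_maximalFunction f).div_const 2).aemeasurable hs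
    (mul_measure_lt_maximalFunction_div_two_le hA hf)

lemma exists_lintegral_rpow_le_of_lintegral_mul_le_maximalFunction [SigmaFinite μ]
    (hA : ∀ c r, 0 < r → μ (closedBall c (5 * r)) ≤ A * μ (ball c r)) {r : ℝ} (hr : 1 ≤ r)
    (C : ℝ≥0) :
    ∃ D : ℝ≥0, ∀ u v : X → ℝ≥0∞, Measurable v →
      (∀ h, Measurable h →
        ∫⁻ x, h x * u x ∂μ ≤ C * ∫⁻ x, v x * maximalFunction μ h x ∂μ) →
      ∫⁻ x, u x ^ r ∂μ ≤ D * ∫⁻ x, v x ^ r ∂μ := by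
  rcases hr.eq_or_lt with rfl | hr
  · refine ⟨C, fun u v _ huv => ?_⟩
    calc ∫⁻ x, u x ^ (1 : ℝ) ∂μ ≤ C * ∫⁻ x, v x * maximalFunction μ (fun _ => 1) x ∂μ := by
          simpa only [ENNReal.rpow_one, one_mul] using huv (fun _ => 1) measurable_const
      _ ≤ C * ∫⁻ x, v x ^ (1 : ℝ) ∂μ := by
          gcongr with x
          rw [ENNReal.rpow_one]
          exact mul_le_of_le_one_right' (maximalFunction_const_le 1 x)
  · have hrs := Real.HolderConjugate.conjExponent hr
    set s := r.conjExponent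
    set K : ℝ≥0∞ := 2 ^ s * (ENNReal.ofReal (s / (s - 1)) * A)
    have hK : K ≠ ∞ := by finiteness [hrs.symm.nonneg]
    have hD : (C * K ^ s⁻¹) ^ r ≠ ∞ := by finiteness [hrs.nonneg, hrs.symm.inv_nonneg]
    refine ⟨((C * K ^ s⁻¹) ^ r).toNNReal, fun u v hv huv => ?_⟩
    rw [ENNReal.coe_toNNReal hD]
    exact lintegral_rpow_le_of_forall_lintegral_mul_le_lintegral_mul hrs
      (fun h _ => (measurable_maximalFunction h).aemeasurable)
      (fun h hh => lintegral_maximalFunction_rpow_le hA hh hrs.symm.lt) hv.aemeasurable huv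

end MaximalFunction

section Kernel

open Module

variable {E : Type*} [NormedAddCommGroup E] [NormedSpace ℝ E]

/-- The kernel `t⁻ⁿ (1 + |x - y| / t)⁻ᵇ` on an `n`-dimensional space, with respect to which the
`g_λ^*` functional averages (for `b = λ n`). -/
noncomputable def decayKernel (b t : ℝ) (x y : E) : ℝ≥0∞ :=
  ENNReal.ofReal ((t / (t + dist x y)) ^ b * t ^ (-(finrank ℝ E : ℝ)))

lemma decayKernel_le_tsum_indicator_ball {b t : ℝ} (hb : 0 ≤ b) (ht : 0 < t) (x y : E) :
    decayKernel b t x y ≤ ∑' j : ℕ,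
      ENNReal.ofReal ((2 ^ j)⁻¹ ^ b * t ^ (-(finrank ℝ E : ℝ))) *
        (ball y (2 ^ (j + 1) * t)).indicator 1 x := by
  have hd : 0 ≤ dist x y := dist_nonneg
  obtain ⟨j, hj, hj'⟩ : ∃ j : ℕ, 2 ^ j ≤ (t + dist x y) / t ∧ (t + dist x y) / t < 2 ^ (j + 1) :=
    exists_nat_pow_near ((one_le_div ht).2 (by linarith)) one_lt_two
  have hx : x ∈ ball y (2 ^ (j + 1) * t) := by
    rw [div_lt_iff₀ ht] at hj'
    exact mem_ball.2 (by linarith)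
  refine le_trans ?_ (ENNReal.le_tsum j)
  rw [indicator_of_mem hx, Pi.one_apply, mul_one]
  refine ENNReal.ofReal_le_ofReal ?_
  gcongr
  rw [← inv_div]
  gcongr

lemma exists_finrank_lt_forall_decayKernel_eq [FiniteDimensional ℝ E] {lam : ℝ} (hlam : 1 < lam) :
    ∃ b : ℝ, finrank ℝ E < b ∧ ∀ t, 0 < t → ∀ x y : E,
      decayKernel (lam * finrank ℝ E) t x y = decayKernel b t x y := by
  rcases (finrank ℝ E).eq_zero_or_pos with hE | hE
  -- Here `lam * finrank ℝ E` does not exceed the dimension, but `dist x y = 0` and any `b` works.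
  · have : Subsingleton E := finrank_zero_iff.1 hE
    refine ⟨1, by simp only [hE, Nat.cast_zero, zero_lt_one], fun t ht x y => ?_⟩
    simp only [decayKernel, Subsingleton.elim x y, dist_self, add_zero, div_self ht.ne',
      Real.one_rpow]
  · exact ⟨lam * finrank ℝ E, lt_mul_of_one_lt_left (Nat.cast_pos.2 hE) hlam, fun _ _ _ _ => rfl⟩

variable [MeasurableSpace E] [BorelSpace E]

lemma measurable_decayKernel {α : Type*} [MeasurableSpace α] [SecondCountableTopology E] {b : ℝ}
    {t : α → ℝ} {x y : α → E} (ht : Measurable t) (hx : Measurable x)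
    (hy : Measurable y) : Measurable fun a => decayKernel b (t a) (x a) (y a) := by
  unfold decayKernel
  fun_prop

variable [FiniteDimensional ℝ E] {μ : Measure E} [μ.IsAddHaarMeasure]

lemma addHaar_closedBall_five_mul_le (c : E) (r : ℝ) (hr : 0 < r) :
    μ (closedBall c (5 * r)) ≤ (5 ^ finrank ℝ E : ℝ≥0) * μ (ball c r) := by
  rw [Measure.addHaar_closedBall μ c (by positivity), Measure.addHaar_ball_of_pos μ c hr, mul_pow,
    ENNReal.ofReal_mul (by positivity), ENNReal.ofReal_pow (by positivity), ENNReal.ofReal_ofNat,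
    mul_assoc]
  push_cast
  rfl

lemma ofReal_mul_addHaar_ball_two_pow (b : ℝ) {t : ℝ} (ht : 0 < t) (y : E) (j : ℕ) :
    ENNReal.ofReal ((2 ^ j)⁻¹ ^ b * t ^ (-(finrank ℝ E : ℝ))) * μ (ball y (2 ^ (j + 1) * t)) =
      2 ^ finrank ℝ E * μ (ball 0 1) * ENNReal.ofReal (2 ^ (finrank ℝ E - b)) ^ j := by
  have hpow : (2 ^ j : ℝ)⁻¹ ^ b * t ^ (-(finrank ℝ E : ℝ)) * (2 ^ (j + 1) * t) ^ finrank ℝ E =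
      2 ^ finrank ℝ E * (2 ^ (finrank ℝ E - b)) ^ j := by
    have hdecay : ((2 ^ j)⁻¹ : ℝ) ^ b = ((2 ^ b) ^ j)⁻¹ := by
      rw [Real.inv_rpow (by positivity), Real.rpow_pow_comm zero_le_two]
    rw [hdecay, Real.rpow_sub two_pos, Real.rpow_neg ht.le, Real.rpow_natCast, Real.rpow_natCast,
      div_pow, mul_pow, pow_right_comm, pow_succ]
    field_simp
  rw [Measure.addHaar_ball_of_pos μ y (by positivity), ← mul_assoc,
    ← ENNReal.ofReal_mul (by positivity), hpow, ENNReal.ofReal_mul (by positivity),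
    ENNReal.ofReal_pow (by positivity), ENNReal.ofReal_pow (by positivity), ENNReal.ofReal_ofNat]
  ring

lemma lintegral_mul_decayKernel_le {b t : ℝ} (hb : 0 ≤ b) (ht : 0 < t) {h : E → ℝ≥0∞}
    (hh : Measurable h) (y : E) :
    ∫⁻ x, h x * decayKernel b t x y ∂μ ≤
      2 ^ finrank ℝ E * μ (ball 0 1) * (1 - ENNReal.ofReal (2 ^ (finrank ℝ E - b)))⁻¹ *
        maximalFunction μ h y := by
  set w : ℕ → ℝ≥0∞ := fun j => ENNReal.ofReal ((2 ^ j)⁻¹ ^ b * t ^ (-(finrank ℝ E : ℝ)))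
  set B : ℕ → Set E := fun j => ball y (2 ^ (j + 1) * t)
  calc ∫⁻ x, h x * decayKernel b t x y ∂μ
      ≤ ∫⁻ x, ∑' j, w j * (B j).indicator h x ∂μ := by
        refine lintegral_mono fun x => ?_
        calc h x * decayKernel b t x y ≤ h x * ∑' j, w j * (B j).indicator 1 x := by
              gcongr
              exact decayKernel_le_tsum_indicator_ball hb ht x y
          _ = ∑' j, w j * (B j).indicator h x := by
              rw [← ENNReal.tsum_mul_left]
              refine tsum_congr fun j => ?_
              by_cases hx : x ∈ B j <;> simp [hx, mul_comm]
    _ = ∑' j, w j * ∫⁻ x in B j, h x ∂μ := by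
        rw [lintegral_tsum fun j => ((hh.indicator measurableSet_ball).const_mul _).aemeasurable]
        refine tsum_congr fun j => ?_
        rw [lintegral_const_mul' _ _ ENNReal.ofReal_ne_top, lintegral_indicator measurableSet_ball]
    _ ≤ ∑' j, w j * (μ (B j) * maximalFunction μ h y) := by
        gcongr with j
        exact setLIntegral_ball_le_measure_mul_maximalFunction h (mem_ball_self (by positivity))
    _ = _ := by
        simp only [← mul_assoc, w, B, ofReal_mul_addHaar_ball_two_pow b ht, ENNReal.tsum_mul_right,
          ENNReal.tsum_mul_left, ENNReal.tsum_geometric]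

lemma exists_lintegral_mul_decayKernel_le {b : ℝ} (hb : finrank ℝ E < b) :
    ∃ C : ℝ≥0, ∀ h : E → ℝ≥0∞, Measurable h → ∀ t, 0 < t → ∀ y,
      ∫⁻ x, h x * decayKernel b t x y ∂μ ≤ C * maximalFunction μ h y := by
  have hratio : ENNReal.ofReal (2 ^ (finrank ℝ E - b)) < 1 := by
    rw [ENNReal.ofReal_lt_one]
    exact Real.rpow_lt_one_of_one_lt_of_neg one_lt_two (sub_neg.2 hb)
  have hinv : (1 - ENNReal.ofReal (2 ^ (finrank ℝ E - b)))⁻¹ ≠ ∞ :=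
    ENNReal.inv_ne_top.2 (tsub_pos_of_lt hratio).ne'
  have hball : μ (ball (0 : E) 1) ≠ ∞ := measure_ball_lt_top.ne
  refine ⟨(2 ^ finrank ℝ E * μ (ball 0 1) *
    (1 - ENNReal.ofReal (2 ^ (finrank ℝ E - b)))⁻¹).toNNReal, fun h hh t ht y => ?_⟩
  rw [ENNReal.coe_toNNReal (by finiteness)]
  exact lintegral_mul_decayKernel_le ((Nat.cast_nonneg _).trans hb.le) ht hh y

lemma exists_lintegral_mul_lintegral_decayKernel_le {b : ℝ} (hb : finrank ℝ E < b)
    {ν : Measure ℝ} [SFinite ν] (hν : ∀ᵐ t ∂ν, 0 < t) :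
    ∃ C : ℝ≥0, ∀ Φ : E × ℝ → ℝ≥0∞, Measurable Φ → ∀ h : E → ℝ≥0∞, Measurable h →
      ∫⁻ x, h x * ∫⁻ z, Φ z * decayKernel b z.2 x z.1 ∂μ.prod ν ∂μ ≤
        C * ∫⁻ y, (∫⁻ t, Φ (y, t) ∂ν) * maximalFunction μ h y ∂μ := by
  obtain ⟨C, hC⟩ := exists_lintegral_mul_decayKernel_le (μ := μ) hb
  refine ⟨C, fun Φ hΦ h hh => ?_⟩
  have hpos : ∀ᵐ z ∂μ.prod ν, 0 < z.2 := Measure.quasiMeasurePreserving_snd.ae hν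
  have hM : Measurable (maximalFunction μ h) := measurable_maximalFunction h
  have hK : Measurable fun w : E × E × ℝ => decayKernel b w.2.2 w.1 w.2.1 :=
    measurable_decayKernel (by fun_prop) (by fun_prop) (by fun_prop)
  calc ∫⁻ x, h x * ∫⁻ z, Φ z * decayKernel b z.2 x z.1 ∂μ.prod ν ∂μ
      = ∫⁻ x, ∫⁻ z, h x * (Φ z * decayKernel b z.2 x z.1) ∂μ.prod ν ∂μ := by
        refine lintegral_congr fun x => ?_
        exact (lintegral_const_mul _ (hΦ.mul (hK.comp measurable_prodMk_left))).symm
    _ = ∫⁻ z, ∫⁻ x, h x * (Φ z * decayKernel b z.2 x z.1) ∂μ ∂μ.prod ν :=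
        lintegral_lintegral_swap
          ((hh.comp measurable_fst).mul ((hΦ.comp measurable_snd).mul hK)).aemeasurable
    _ = ∫⁻ z, Φ z * ∫⁻ x, h x * decayKernel b z.2 x z.1 ∂μ ∂μ.prod ν := by
        refine lintegral_congr fun z => ?_
        simp only [mul_left_comm (h _) (Φ z)]
        exact lintegral_const_mul _ (hh.mul (hK.comp measurable_prodMk_right))
    _ ≤ ∫⁻ z, C * (Φ z * maximalFunction μ h z.1) ∂μ.prod ν := by
        refine lintegral_mono_ae (hpos.mono fun z hz => ?_)
        rw [mul_left_comm]
        gcongr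
        exact hC h hh z.2 hz z.1
    _ = C * ∫⁻ y, ∫⁻ t, Φ (y, t) * maximalFunction μ h y ∂ν ∂μ := by
        rw [lintegral_const_mul' _ _ ENNReal.coe_ne_top, lintegral_prod _ (by fun_prop)]
    _ = C * ∫⁻ y, (∫⁻ t, Φ (y, t) ∂ν) * maximalFunction μ h y ∂μ := by
        congr 1
        refine lintegral_congr fun y => lintegral_mul_const _ (by fun_prop)

end Kernel

section LittlewoodPaley

variable {n : ℕ} {p q lam : ℝ} {F : EuclideanSpace ℝ (Fin n) → ℝ → ℝ≥0∞}

lemma GFn_rpow (hq : q ≠ 0) (x : EuclideanSpace ℝ (Fin n)) :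
    GFn n q F x ^ q = ∫⁻ t in Ioo (0 : ℝ) 1, F x t ^ q * ENNReal.ofReal t⁻¹ := by
  rw [GFn, one_div, ENNReal.rpow_inv_rpow hq]

lemma ofReal_mul_ofReal_rpow_eq_decayKernel_mul {b t : ℝ} (ht : 0 < t)
    (x y : EuclideanSpace ℝ (Fin n)) :
    ENNReal.ofReal ((t / (t + dist x y)) ^ b) * ENNReal.ofReal (t ^ (-(n : ℝ) - 1)) =
      ENNReal.ofReal t⁻¹ * decayKernel b t x y := by
  rw [decayKernel, finrank_euclideanSpace_fin, Real.rpow_sub_one ht.ne',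
    ← ENNReal.ofReal_mul (by positivity), ← ENNReal.ofReal_mul (by positivity)]
  congr 1
  ring

lemma GlambdaFn_rpow (hq : q ≠ 0) (hF : Measurable (Function.uncurry F))
    (x : EuclideanSpace ℝ (Fin n)) :
    GlambdaFn n q lam F x ^ q =
      ∫⁻ z, F z.1 z.2 ^ q * ENNReal.ofReal z.2⁻¹ * decayKernel (lam * n) z.2 x z.1
        ∂volume.prod (volume.restrict (Ioo 0 1)) := by
  have hFz : Measurable fun z : EuclideanSpace ℝ (Fin n) × ℝ => F z.1 z.2 := hF
  have hK : Measurable fun z : EuclideanSpace ℝ (Fin n) × ℝ =>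
      decayKernel (lam * n) z.2 x z.1 :=
    measurable_decayKernel measurable_snd measurable_const measurable_fst
  rw [GlambdaFn, one_div, ENNReal.rpow_inv_rpow hq, lintegral_prod_symm _ (by fun_prop)]
  refine setLIntegral_congr_fun measurableSet_Ioo fun t ht => ?_
  dsimp only
  rw [← lintegral_mul_const' _ _ ENNReal.ofReal_ne_top]
  refine lintegral_congr fun y => ?_
  rw [mul_assoc, ofReal_mul_ofReal_rpow_eq_decayKernel_mul ht.1, mul_assoc]

lemma exists_lintegral_mul_GlambdaFn_rpow_le (n : ℕ) (hq : q ≠ 0) (hlam : 1 < lam) :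
    ∃ C : ℝ≥0, ∀ F : EuclideanSpace ℝ (Fin n) → ℝ → ℝ≥0∞, Measurable (Function.uncurry F) →
      ∀ h, Measurable h → ∫⁻ x, h x * GlambdaFn n q lam F x ^ q ≤
        C * ∫⁻ x, GFn n q F x ^ q * maximalFunction volume h x := by
  obtain ⟨b, hb, hbK⟩ :=
    exists_finrank_lt_forall_decayKernel_eq (E := EuclideanSpace ℝ (Fin n)) hlam
  rw [finrank_euclideanSpace_fin] at hbK
  have hν : ∀ᵐ t ∂volume.restrict (Ioo (0 : ℝ) 1), 0 < t :=
    (ae_restrict_mem measurableSet_Ioo).mono fun t ht => ht.1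
  obtain ⟨C, hC⟩ := exists_lintegral_mul_lintegral_decayKernel_le (μ := volume) hb hν
  refine ⟨C, fun F hF h hh => ?_⟩
  have hFz : Measurable fun z : EuclideanSpace ℝ (Fin n) × ℝ => F z.1 z.2 := hF
  have hGlambda : ∀ x, GlambdaFn n q lam F x ^ q =
      ∫⁻ z, F z.1 z.2 ^ q * ENNReal.ofReal z.2⁻¹ * decayKernel b z.2 x z.1
        ∂volume.prod (volume.restrict (Ioo 0 1)) := fun x => by
    rw [GlambdaFn_rpow hq hF]
    refine lintegral_congr_ae ((Measure.quasiMeasurePreserving_snd.ae hν).mono fun z hz => ?_)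
    simp only [hbK z.2 hz]
  simp only [hGlambda, GFn_rpow hq]
  exact hC _ (by fun_prop) h hh

lemma measurable_GFn (hF : Measurable (Function.uncurry F)) : Measurable (GFn n q F) := by
  have hint : Measurable fun z : EuclideanSpace ℝ (Fin n) × ℝ =>
      F z.1 z.2 ^ q * ENNReal.ofReal z.2⁻¹ :=
    (hF.pow_const q).mul (by fun_prop)
  exact hint.lintegral_prod_right'.pow_const _

lemma Np_le_of_lintegral_rpow_le (hp : 0 ≤ p) {f g : EuclideanSpace ℝ (Fin n) → ℝ≥0∞} {D : ℝ≥0∞}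
    (hfg : ∫⁻ x, f x ^ p ≤ D * ∫⁻ x, g x ^ p) : Np n p f ≤ D ^ (1 / p) * Np n p g := by
  have hp' : 0 ≤ 1 / p := one_div_nonneg.2 hp
  rw [Np, Np, ← ENNReal.mul_rpow_of_nonneg _ _ hp']
  exact ENNReal.rpow_le_rpow hfg hp'

end LittlewoodPaley

theorem Glambda_Lp_le_G_Lp_general (n : ℕ) (p q lam : ℝ) (hq : 0 < q) (hqp : q ≤ p)
    (hlam : 1 < lam) :
    ∃ C : ℝ, 0 < C ∧ ∀ F : EuclideanSpace ℝ (Fin n) → ℝ → ℝ≥0∞,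
      Measurable (Function.uncurry F) →
      Np n p (GlambdaFn n q lam F) ≤ ENNReal.ofReal C * Np n p (GFn n q F) := by
  have hp : 0 < p := hq.trans_le hqp
  obtain ⟨C, hC⟩ := exists_lintegral_mul_GlambdaFn_rpow_le n hq.ne' hlam
  obtain ⟨D, hD⟩ := exists_lintegral_rpow_le_of_lintegral_mul_le_maximalFunction
    (μ := (volume : Measure (EuclideanSpace ℝ (Fin n)))) addHaar_closedBall_five_mul_le
    ((one_le_div hq).2 hqp) C
  refine ⟨(D : ℝ) ^ (1 / p) + 1, by positivity, fun F hF => ?_⟩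
  have hpow : ∫⁻ x, GlambdaFn n q lam F x ^ p ≤ D * ∫⁻ x, GFn n q F x ^ p := by
    simpa only [← ENNReal.rpow_mul, mul_div_cancel₀ p hq.ne'] using
      hD _ _ ((measurable_GFn hF).pow_const q) (hC F hF)
  calc Np n p (GlambdaFn n q lam F) ≤ (D : ℝ≥0∞) ^ (1 / p) * Np n p (GFn n q F) :=
        Np_le_of_lintegral_rpow_le hp.le hpow
    _ ≤ ENNReal.ofReal ((D : ℝ) ^ (1 / p) + 1) * Np n p (GFn n q F) := by
        gcongr
        rw [← ENNReal.ofReal_coe_nnreal, ENNReal.ofReal_rpow_of_nonneg D.coe_nonneg (by positivity)]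
        exact ENNReal.ofReal_le_ofReal (by linarith)

/-- for `p ≥ q`, `‖G_λ^*(F)‖_{L^p} ≤ C ‖G(F)‖_{L^p}`. -/
theorem Glambda_Lp_le_G_Lp (n : ℕ) (p q lam : ℝ) (hq : 1 < q) (hp : 1 < p)
    (hqp : q ≤ p) (hlam : 1 < lam) :
    ∃ C : ℝ, 0 < C ∧ ∀ F : EuclideanSpace ℝ (Fin n) → ℝ → ℝ≥0∞,
      Measurable (Function.uncurry F) →
      Np n p (GlambdaFn n q lam F) ≤ ENNReal.ofReal C * Np n p (GFn n q F) :=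
  Glambda_Lp_le_G_Lp_general n p q lam (zero_lt_one.trans hq) hqp hlam
end

section
/- Let p ∈ (1,∞), q ∈ (1,∞), λ ∈ (q/p, ∞) with p < q, and let F be a nonnegative measurable function on R^n × (0,∞). Then ‖G_λ^*(F)‖_{L^p(R^n)} ≤ C Σ_{k=0}^∞ 2^{−kn(λ−1)/q} ‖S_{2^k}(F)‖_{L^p(R^n)}, and consequently, using ‖S_{2^k}(F)‖_{L^p} ≤ C 2^{kn(1/p − 1/q)}‖S(F)‖_{L^p}, one has ‖G_λ^*(F)‖_{L^p(R^n)} ≤ C' ‖S(F)‖_{L^p(R^n)}. -/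
open MeasureTheory Metric
open scoped ENNReal

/-- The Lusin-area functional with aperture `β`. -/
noncomputable def SFn (n : ℕ) (q β : ℝ)
    (F : EuclideanSpace ℝ (Fin n) → ℝ → ℝ≥0∞) (x : EuclideanSpace ℝ (Fin n)) : ℝ≥0∞ :=
  (∫⁻ t in Set.Ioo (0:ℝ) 1,
      (⨍⁻ y in ball x (β * t), F y t ^ q ∂volume) * ENNReal.ofReal t⁻¹) ^ (1 / q)

/-!
For `0 < t < 1` the weight `(t / (t + |x - y|)) ^ (λ n)` is at most `(2 * 2⁻ᵏ) ^ (λ n)` on the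
annulus of the `y` with `2ᵏ⁻¹ t ≤ |x - y| < 2ᵏ t`. Hence `G_λ^*(F) ^ q` is dominated by a weighted
sum of the integrals of `F(y,t)^q t^{-n-1}` over the cones of aperture `2ᵏ`, and Minkowski's
inequality in `L^p` gives the first estimate.

For the change of aperture let `U_β` be the integral over the cone of aperture `β`, let
`A = {U_1 > ε}` and let `D` be the set of points having a ball of which `A` fills more than the
fraction `1 / K`, where `K = 2 (2β)ⁿ`. The Vitali covering lemma bounds `|D|` by `5ⁿ K |A|`. If
`|x - y| < β t` with `x ∉ D`, then `A` fills at most half of `B(y, t)`, so Tonelli bounds the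
integral of `U_β` off `D` by `2 βⁿ` times that of `U_1` off `A`. Together these give
`ε |{U_β > ε}| ≲ βⁿ ∫ min(U_1, ε)`. Integrating against `ε^{r-2} dε` with `r = p / q < 1` yields
`‖S_β‖_p ≲ β^{n(1/p - 1/q)} ‖S_1‖_p`, and `λ > q / p` makes the resulting series in `k` geometric
with ratio less than one, unless `n = 0`, where all cones are full and `G_λ^*(F) = S_1(F)`.
-/

lemma lintegral_Ioc_rpow {a c : ℝ} (ha : -1 < a) (hc : 0 ≤ c) :
    ∫⁻ s in Set.Ioc 0 c, ENNReal.ofReal (s ^ a) = ENNReal.ofReal (c ^ (a + 1) / (a + 1)) := by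
  have hint : IntegrableOn (fun s : ℝ => s ^ a) (Set.Ioc 0 c) :=
    (intervalIntegrable_iff_integrableOn_Ioc_of_le hc).1
      (intervalIntegral.intervalIntegrable_rpow' ha)
  have hnonneg : 0 ≤ᵐ[volume.restrict (Set.Ioc 0 c)] fun s : ℝ => s ^ a :=
    ae_restrict_of_forall_mem measurableSet_Ioc fun s hs => Real.rpow_nonneg hs.1.le a
  rw [← ofReal_integral_eq_lintegral_ofReal hint hnonneg, ← intervalIntegral.integral_of_le hc,
    integral_rpow (Or.inl ha), Real.zero_rpow (by linarith), sub_zero]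

lemma lintegral_Ioi_rpow {a c : ℝ} (ha : a < -1) (hc : 0 < c) :
    ∫⁻ s in Set.Ioi c, ENNReal.ofReal (s ^ a) = ENNReal.ofReal (-c ^ (a + 1) / (a + 1)) := by
  have hnonneg : 0 ≤ᵐ[volume.restrict (Set.Ioi c)] fun s : ℝ => s ^ a :=
    ae_restrict_of_forall_mem measurableSet_Ioi fun s hs => Real.rpow_nonneg (hc.trans hs).le a
  rw [← ofReal_integral_eq_lintegral_ofReal (integrableOn_Ioi_rpow_of_lt ha hc) hnonneg,
    integral_Ioi_rpow_of_lt ha hc]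

lemma lintegral_Ioi_zero_rpow (a : ℝ) : ∫⁻ s in Set.Ioi (0 : ℝ), ENNReal.ofReal (s ^ a) = ⊤ := by
  have hnonneg : 0 ≤ᵐ[volume.restrict (Set.Ioi 0)] fun s : ℝ => s ^ a :=
    ae_restrict_of_forall_mem measurableSet_Ioi fun s hs => Real.rpow_nonneg hs.le a
  by_contra h
  exact not_integrableOn_Ioi_rpow a ((lintegral_ofReal_ne_top_iff_integrable
    (by fun_prop) hnonneg).1 h)

lemma rpow_eq_lintegral {r : ℝ} (hr : 0 < r) (u : ℝ≥0∞) :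
    u ^ r = ENNReal.ofReal r *
      ∫⁻ s in Set.Ioi 0 ∩ {s : ℝ | ENNReal.ofReal s < u}, ENNReal.ofReal (s ^ (r - 1)) := by
  induction u with
  | top =>
    simp [lintegral_Ioi_zero_rpow, ENNReal.top_rpow_of_pos hr, ENNReal.mul_top, hr]
  | coe u =>
    have hset : Set.Ioi 0 ∩ {s : ℝ | ENNReal.ofReal s < u} = Set.Ioo 0 (u : ℝ) := by
      ext s
      refine and_congr_right fun hs => ?_
      rw [Set.mem_ofPred_eq, ← ENNReal.ofReal_coe_nnreal,
        ENNReal.ofReal_lt_ofReal_iff_of_nonneg (le_of_lt hs)]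
    rw [hset, setLIntegral_congr Ioo_ae_eq_Ioc, lintegral_Ioc_rpow (by linarith) u.coe_nonneg,
      ← ENNReal.ofReal_mul hr.le, sub_add_cancel, mul_div_cancel₀ _ hr.ne',
      ← ENNReal.ofReal_rpow_of_nonneg u.coe_nonneg hr.le, ENNReal.ofReal_coe_nnreal]

lemma lintegral_rpow_mul_min_ofReal {r c : ℝ} (hr : 0 < r) (hr1 : r < 1) (hc : 0 < c) :
    ∫⁻ s in Set.Ioi (0 : ℝ), ENNReal.ofReal (s ^ (r - 2)) *
        min (ENNReal.ofReal c) (ENNReal.ofReal s) =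
      ENNReal.ofReal (c ^ r / r + c ^ r / (1 - r)) := by
  have h1r : 0 < 1 - r := sub_pos.2 hr1
  have hlow : ∫⁻ s in Set.Ioc 0 c, ENNReal.ofReal (s ^ (r - 2)) *
      min (ENNReal.ofReal c) (ENNReal.ofReal s) = ENNReal.ofReal (c ^ r / r) := by
    calc _ = ∫⁻ s in Set.Ioc 0 c, ENNReal.ofReal (s ^ (r - 1)) := by
          refine setLIntegral_congr_fun measurableSet_Ioc fun s hs => ?_
          rw [min_eq_right (ENNReal.ofReal_le_ofReal hs.2),
            ← ENNReal.ofReal_mul (Real.rpow_nonneg hs.1.le _), ← Real.rpow_add_one hs.1.ne',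
            show r - 2 + 1 = r - 1 by ring]
      _ = _ := by rw [lintegral_Ioc_rpow (by linarith) hc.le, sub_add_cancel]
  have hhigh : ∫⁻ s in Set.Ioi c, ENNReal.ofReal (s ^ (r - 2)) *
      min (ENNReal.ofReal c) (ENNReal.ofReal s) = ENNReal.ofReal (c ^ r / (1 - r)) := by
    calc _ = ∫⁻ s in Set.Ioi c, ENNReal.ofReal (s ^ (r - 2)) * ENNReal.ofReal c :=
          setLIntegral_congr_fun measurableSet_Ioi fun s hs => by
            rw [min_eq_left (ENNReal.ofReal_le_ofReal (le_of_lt hs))]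
      _ = ENNReal.ofReal (-c ^ (r - 2 + 1) / (r - 2 + 1) * c) := by
          rw [lintegral_mul_const' _ _ ENNReal.ofReal_ne_top,
            lintegral_Ioi_rpow (by linarith) hc, ENNReal.ofReal_mul' hc.le]
      _ = _ := by
          rw [show r - 2 + 1 = -(1 - r) by ring, neg_div_neg_eq, div_mul_eq_mul_div,
            ← Real.rpow_add_one hc.ne', show -(1 - r) + 1 = r by ring]
  rw [← Set.Ioc_union_Ioi_eq_Ioi hc.le,
    lintegral_union measurableSet_Ioi (Set.Ioc_disjoint_Ioi le_rfl), hlow, hhigh,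
    ← ENNReal.ofReal_add (by positivity) (div_nonneg (by positivity) h1r.le)]

lemma lintegral_rpow_mul_min_le {r : ℝ} (hr : 0 < r) (hr1 : r < 1) (u : ℝ≥0∞) :
    ENNReal.ofReal r * ∫⁻ s in Set.Ioi (0 : ℝ), ENNReal.ofReal (s ^ (r - 2)) *
        min u (ENNReal.ofReal s) ≤
      ENNReal.ofReal (1 / (1 - r)) * u ^ r := by
  have h1r : 0 < 1 - r := sub_pos.2 hr1
  induction u with
  | top => simp [ENNReal.top_rpow_of_pos hr, ENNReal.mul_top, hr1]
  | coe u =>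
    rcases eq_or_ne u 0 with rfl | hu
    · simp
    have hu0 : 0 < (u : ℝ) := by positivity
    rw [← ENNReal.ofReal_coe_nnreal, lintegral_rpow_mul_min_ofReal hr hr1 hu0,
      ← ENNReal.ofReal_mul hr.le, ENNReal.ofReal_rpow_of_pos hu0,
      ← ENNReal.ofReal_mul (by positivity)]
    refine (congrArg ENNReal.ofReal ?_).le
    field_simp
    ring

lemma rpow_tsum_le_tsum_rpow {ι : Type*} {r : ℝ} (hr : 0 < r) (hr1 : r ≤ 1) (a : ι → ℝ≥0∞) :
    (∑' i, a i) ^ r ≤ ∑' i, a i ^ r :=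
  le_of_tendsto' ((ENNReal.continuous_rpow_const (y := r)).tendsto _ |>.comp
    ENNReal.summable.hasSum) fun s =>
    (Finset.le_sum_of_subadditive (· ^ r) (ENNReal.zero_rpow_of_pos hr).le
      (fun a b => ENNReal.rpow_add_le_add_rpow a b hr.le hr1) s a).trans (ENNReal.sum_le_tsum s)

section MeasurableSpace

variable {α : Type*} [MeasurableSpace α] {μ : Measure α}

lemma lintegral_rpow_eq_lintegral_rpow_mul_measure_lt [SFinite μ] {v : α → ℝ≥0∞}
    (hv : Measurable v) {r : ℝ} (hr : 0 < r) :
    ∫⁻ x, v x ^ r ∂μ = ENNReal.ofReal r * ∫⁻ s in Set.Ioi (0 : ℝ),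
      ENNReal.ofReal (s ^ (r - 1)) * μ {x | ENNReal.ofReal s < v x} := by
  have hpoint (x : α) : v x ^ r = ENNReal.ofReal r * ∫⁻ s in Set.Ioi (0 : ℝ),
      {s : ℝ | ENNReal.ofReal s < v x}.indicator (fun s => ENNReal.ofReal (s ^ (r - 1))) s := by
    rw [setLIntegral_indicator (measurableSet_lt (by fun_prop) measurable_const), Set.inter_comm,
      ← rpow_eq_lintegral hr]
  have hmeas : Measurable (Function.uncurry fun (x : α) (s : ℝ) =>
      {s : ℝ | ENNReal.ofReal s < v x}.indicator (fun s => ENNReal.ofReal (s ^ (r - 1))) s) :=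
    Measurable.indicator (f := fun z : α × ℝ => ENNReal.ofReal (z.2 ^ (r - 1))) (by fun_prop)
      (measurableSet_lt (f := fun z : α × ℝ => ENNReal.ofReal z.2) (g := fun z => v z.1)
        (by fun_prop) (by fun_prop))
  simp_rw [hpoint]
  rw [lintegral_const_mul' _ _ ENNReal.ofReal_ne_top, lintegral_lintegral_swap hmeas.aemeasurable]
  congr! 3
  exact lintegral_indicator_const (measurableSet_lt measurable_const hv) _

lemma lintegral_rpow_le_of_mul_measure_lt_le_s19 [SFinite μ] {u v : α → ℝ≥0∞} (hu : Measurable u)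
    (hv : Measurable v) {K : ℝ≥0∞}
    (hweak : ∀ s : ℝ, 0 < s → ENNReal.ofReal s * μ {x | ENNReal.ofReal s < v x} ≤
      K * ∫⁻ x, min (u x) (ENNReal.ofReal s) ∂μ)
    {r : ℝ} (hr : 0 < r) (hr1 : r < 1) :
    ∫⁻ x, v x ^ r ∂μ ≤ K * ENNReal.ofReal (1 / (1 - r)) * ∫⁻ x, u x ^ r ∂μ := by
  have hmeas : Measurable (Function.uncurry fun (s : ℝ) (x : α) =>
      ENNReal.ofReal (s ^ (r - 2)) * min (u x) (ENNReal.ofReal s)) := by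
    fun_prop
  calc ∫⁻ x, v x ^ r ∂μ
      = ENNReal.ofReal r * ∫⁻ s in Set.Ioi (0 : ℝ), ENNReal.ofReal (s ^ (r - 2)) *
          (ENNReal.ofReal s * μ {x | ENNReal.ofReal s < v x}) := by
        rw [lintegral_rpow_eq_lintegral_rpow_mul_measure_lt hv hr]
        congr 1
        refine setLIntegral_congr_fun measurableSet_Ioi fun s hs => ?_
        rw [← mul_assoc, ← ENNReal.ofReal_mul (Real.rpow_nonneg (le_of_lt hs) _),
          ← Real.rpow_add_one (ne_of_gt hs), show r - 2 + 1 = r - 1 by ring]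
    _ ≤ ENNReal.ofReal r * ∫⁻ s in Set.Ioi (0 : ℝ), K *
          ∫⁻ x, ENNReal.ofReal (s ^ (r - 2)) * min (u x) (ENNReal.ofReal s) ∂μ := by
        gcongr ENNReal.ofReal r * ?_
        refine setLIntegral_mono' measurableSet_Ioi fun s hs => ?_
        rw [lintegral_const_mul' _ _ ENNReal.ofReal_ne_top, mul_left_comm K]
        exact mul_le_mul_right (hweak s hs) _
    _ = K * ∫⁻ x, ENNReal.ofReal r * (∫⁻ s in Set.Ioi (0 : ℝ), ENNReal.ofReal (s ^ (r - 2)) *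
          min (u x) (ENNReal.ofReal s)) ∂μ := by
        rw [lintegral_const_mul _ hmeas.lintegral_prod_right,
          lintegral_lintegral_swap hmeas.aemeasurable,
          lintegral_const_mul' _ _ ENNReal.ofReal_ne_top, mul_left_comm]
    _ ≤ K * ∫⁻ x, ENNReal.ofReal (1 / (1 - r)) * u x ^ r ∂μ := by
        gcongr K * ∫⁻ x, ?_ ∂μ with x
        exact lintegral_rpow_mul_min_le hr hr1 (u x)
    _ = K * ENNReal.ofReal (1 / (1 - r)) * ∫⁻ x, u x ^ r ∂μ := by
        rw [lintegral_const_mul' _ _ ENNReal.ofReal_ne_top, mul_assoc]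

lemma lintegral_min_const {u : α → ℝ≥0∞} (hu : Measurable u) (ε : ℝ≥0∞) :
    ∫⁻ x, min (u x) ε ∂μ = ε * μ {x | ε < u x} + ∫⁻ x in {x | ε < u x}ᶜ, u x ∂μ := by
  have hA : MeasurableSet {x | ε < u x} := measurableSet_lt measurable_const hu
  rw [← lintegral_add_compl _ hA, ← setLIntegral_const]
  exact congrArg₂ (· + ·) (setLIntegral_congr_fun hA fun x hx => min_eq_right (le_of_lt hx))
    (setLIntegral_congr_fun hA.compl fun x hx => min_eq_left (not_lt.1 hx))

lemma eLpNorm'_tsum_le {p : ℝ} (hp : 1 ≤ p) {f : ℕ → α → ℝ≥0∞} (hf : ∀ k, Measurable (f k)) :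
    eLpNorm' (fun x => ∑' k, f k x) p μ ≤ ∑' k, eLpNorm' (f k) p μ := by
  have hp0 : 0 < p := zero_lt_one.trans_le hp
  have hsup : eLpNorm' (fun x => ∑' k, f k x) p μ =
      ⨆ N, eLpNorm' (∑ k ∈ Finset.range N, f k) p μ := by
    have hmono : Monotone fun N x => (∑ k ∈ Finset.range N, f k x) ^ p := fun N M hNM x => by
      dsimp only
      gcongr
    have hmeas (N : ℕ) : Measurable fun x => (∑ k ∈ Finset.range N, f k x) ^ p := by fun_prop
    have hrpow (q : ℝ) (hq : 0 < q) (a : ℕ → ℝ≥0∞) : (⨆ N, a N) ^ q = ⨆ N, a N ^ q :=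
      (ENNReal.orderIsoRpow q hq).map_iSup a
    simp only [eLpNorm', enorm_eq_self, ENNReal.tsum_eq_iSup_nat, Finset.sum_apply, hrpow p hp0,
      ← hrpow (1 / p) (by positivity)]
    rw [lintegral_iSup hmeas hmono]
  rw [hsup]
  refine iSup_le fun N => ?_
  exact (eLpNorm'_sum_le (fun k _ => (hf k).aestronglyMeasurable) hp).trans
    (ENNReal.sum_le_tsum _)

end MeasurableSpace

/-- The integral of `H` over the cone `{(y, t) | 0 < t < 1, |x - y| < β t}` of aperture `β` with
vertex `x`. For `H y t = F y t ^ q * t ^ (-n - 1)` it is, up to a constant factor, the `q`-th power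
of the area functional `SFn n q β F`. -/
noncomputable def coneLIntegral {E : Type*} [PseudoMetricSpace E] [MeasurableSpace E]
    (μ : Measure E) (β : ℝ) (H : E → ℝ → ℝ≥0∞) (x : E) : ℝ≥0∞ :=
  ∫⁻ t in Set.Ioo (0 : ℝ) 1, ∫⁻ y in ball x (β * t), H y t ∂μ

section Cone

variable {E : Type*} [PseudoMetricSpace E] [MeasurableSpace E] [OpensMeasurableSpace E]
  {μ : Measure E} {H : E → ℝ → ℝ≥0∞}

lemma lintegral_mul_rpow_le_tsum_lintegral_ball {h : E → ℝ≥0∞} (hh : Measurable h) {a t : ℝ}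
    (ha : 0 ≤ a) (ht : 0 < t) (x : E) :
    ∫⁻ y, h y * ENNReal.ofReal ((t / (t + dist x y)) ^ a) ∂μ ≤
      ∑' k : ℕ, ENNReal.ofReal ((2 * ((2 : ℝ) ^ k)⁻¹) ^ a) *
        ∫⁻ y in ball x (2 ^ k * t), h y ∂μ := by
  simp_rw [← lintegral_indicator measurableSet_ball,
    ← lintegral_const_mul' _ _ ENNReal.ofReal_ne_top]
  rw [← lintegral_tsum fun k => ((hh.indicator measurableSet_ball).const_mul _).aemeasurable]
  refine lintegral_mono fun y => ?_
  have hd : 0 ≤ dist x y := dist_nonneg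
  obtain ⟨k, hlow, hhigh⟩ :=
    exists_nat_pow_near ((one_le_div ht).2 (le_add_of_nonneg_right hd)) (one_lt_two (α := ℝ))
  rw [le_div_iff₀ ht] at hlow
  rw [div_lt_iff₀ ht] at hhigh
  have hweight : t / (t + dist x y) ≤ 2 * ((2 : ℝ) ^ (k + 1))⁻¹ := by
    rw [pow_succ, div_le_iff₀ (by positivity)]
    field_simp
    linarith
  have hmem : y ∈ ball x (2 ^ (k + 1) * t) := by
    rw [mem_ball']
    linarith
  refine le_trans ?_ (ENNReal.le_tsum (k + 1))
  rw [Set.indicator_of_mem hmem, mul_comm]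
  gcongr

variable [SecondCountableTopology E]

lemma measurable_indicator_ball (hH : Measurable (Function.uncurry H)) (β : ℝ) :
    Measurable fun z : (E × ℝ) × E => (ball z.1.1 (β * z.1.2)).indicator (H · z.1.2) z.2 :=
  Measurable.indicator (f := fun z : (E × ℝ) × E => H z.2 z.1.2)
    (hH.comp (f := fun z : (E × ℝ) × E => (z.2, z.1.2)) (by fun_prop))
    (measurableSet_lt (f := fun z : (E × ℝ) × E => dist z.2 z.1.1) (g := fun z => β * z.1.2)
      (by fun_prop) (by fun_prop))

variable [SFinite μ]

lemma measurable_lintegral_ball (hH : Measurable (Function.uncurry H)) (β : ℝ) :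
    Measurable fun z : E × ℝ => ∫⁻ y in ball z.1 (β * z.2), H y z.2 ∂μ := by
  simp_rw [← lintegral_indicator measurableSet_ball]
  exact (measurable_indicator_ball hH β).lintegral_prod_right'

lemma measurable_coneLIntegral (hH : Measurable (Function.uncurry H)) (β : ℝ) :
    Measurable (coneLIntegral μ β H) :=
  (measurable_lintegral_ball hH β).lintegral_prod_right'

lemma setLIntegral_coneLIntegral (hH : Measurable (Function.uncurry H)) (β : ℝ) (A : Set E) :
    ∫⁻ x in A, coneLIntegral μ β H x ∂μ =
      ∫⁻ t in Set.Ioo (0 : ℝ) 1, ∫⁻ y, H y t * μ (ball y (β * t) ∩ A) ∂μ := by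
  have hindicator (t : ℝ) (x y : E) : (ball x (β * t)).indicator (H · t) y =
      (ball y (β * t)).indicator (fun _ => H y t) x := by
    simp only [Set.indicator, mem_ball, dist_comm x y]
  have hslice (t : ℝ) : Measurable fun z : E × E => (ball z.1 (β * t)).indicator (H · t) z.2 :=
    (measurable_indicator_ball hH β).comp (f := fun z : E × E => ((z.1, t), z.2)) (by fun_prop)
  unfold coneLIntegral
  rw [lintegral_lintegral_swap (measurable_lintegral_ball hH β).aemeasurable]
  congr! 2 with t
  simp_rw [← lintegral_indicator measurableSet_ball]
  rw [lintegral_lintegral_swap (hslice t).aemeasurable]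
  congr! 2 with y
  simp_rw [hindicator, lintegral_indicator measurableSet_ball, setLIntegral_const,
    Measure.restrict_apply measurableSet_ball]

lemma lintegral_cone_weight_le_tsum_coneLIntegral (hH : Measurable (Function.uncurry H)) {a : ℝ}
    (ha : 0 ≤ a) (x : E) :
    ∫⁻ t in Set.Ioo (0 : ℝ) 1, ∫⁻ y, H y t * ENNReal.ofReal ((t / (t + dist x y)) ^ a) ∂μ ≤
      ∑' k : ℕ, ENNReal.ofReal ((2 * ((2 : ℝ) ^ k)⁻¹) ^ a) * coneLIntegral μ (2 ^ k) H x := by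
  have hmeas (k : ℕ) : Measurable fun t : ℝ => ∫⁻ y in ball x (2 ^ k * t), H y t ∂μ :=
    (measurable_lintegral_ball hH (2 ^ k)).comp (measurable_prodMk_left (x := x))
  calc _ ≤ ∫⁻ t in Set.Ioo (0 : ℝ) 1, ∑' k : ℕ,
        ENNReal.ofReal ((2 * ((2 : ℝ) ^ k)⁻¹) ^ a) * ∫⁻ y in ball x (2 ^ k * t), H y t ∂μ :=
        setLIntegral_mono' measurableSet_Ioo fun t ht =>
          lintegral_mul_rpow_le_tsum_lintegral_ball (hH.comp measurable_prodMk_right) ha ht.1 x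
    _ = _ := by
        rw [lintegral_tsum fun k => ((hmeas k).const_mul _).aemeasurable]
        simp_rw [lintegral_const_mul' _ _ ENNReal.ofReal_ne_top]
        rfl

end Cone

section Haar

open Module

variable {E : Type*} [NormedAddCommGroup E] [NormedSpace ℝ E] [FiniteDimensional ℝ E]
  [MeasurableSpace E] [BorelSpace E] (μ : Measure E) [μ.IsAddHaarMeasure]

/-- The points having a ball of radius at most `R` around them of which `A` fills more than the
fraction `1 / K`: a superlevel set of the truncated centred maximal function of the indicator of
`A`. -/
def largeDensitySet (A : Set E) (K : ℝ≥0∞) (R : ℝ) : Set E :=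
  {x | ∃ ρ, 0 < ρ ∧ ρ ≤ R ∧ μ (closedBall x ρ) < K * μ (closedBall x ρ ∩ A)}

lemma measure_largeDensitySet_le (A : Set E) (K : ℝ≥0∞) (R : ℝ) :
    μ (largeDensitySet μ A K R) ≤ ENNReal.ofReal (5 ^ finrank ℝ E) * K * μ A := by
  let T : Set (E × ℝ) :=
    {b | 0 < b.2 ∧ b.2 ≤ R ∧ μ (closedBall b.1 b.2) < K * μ (closedBall b.1 b.2 ∩ A)}
  obtain ⟨u, huT, hdisj, hcover⟩ := Vitali.exists_disjoint_subfamily_covering_enlargement_closedBall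
    T Prod.fst Prod.snd R (fun b hb => hb.2.1) 5 (by norm_num)
  have hcount : u.Countable := hdisj.countable_of_nonempty_interior fun b hb =>
    ⟨b.1, ball_subset_interior_closedBall (mem_ball_self (huT hb).1)⟩
  have hsub : largeDensitySet μ A K R ⊆ ⋃ b ∈ u, closedBall b.1 (5 * b.2) := by
    rintro x ⟨ρ, hρ, hxρ⟩
    obtain ⟨b, hb, hxb⟩ := hcover (x, ρ) ⟨hρ, hxρ⟩
    exact Set.mem_biUnion hb (hxb (mem_closedBall_self hρ.le))
  have hball (b : u) : μ (closedBall b.1.1 (5 * b.1.2)) ≤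
      ENNReal.ofReal (5 ^ finrank ℝ E) * K * μ.restrict A (closedBall b.1.1 b.1.2) := by
    obtain ⟨hpos, -, hlt⟩ := huT b.2
    rw [Measure.addHaar_closedBall_mul μ _ (by norm_num) hpos.le, Measure.addHaar_closedBall_center,
      Measure.restrict_apply measurableSet_closedBall, mul_assoc]
    gcongr
    exact (Measure.addHaar_closedBall_center μ _ _).ge.trans hlt.le
  have := hcount.to_subtype
  calc _ ≤ ∑' b : u, μ (closedBall b.1.1 (5 * b.1.2)) :=
        (measure_mono hsub).trans (measure_biUnion_le _ hcount _)
    _ ≤ ∑' b : u, ENNReal.ofReal (5 ^ finrank ℝ E) * K * μ.restrict A (closedBall b.1.1 b.1.2) :=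
        ENNReal.tsum_le_tsum hball
    _ = ENNReal.ofReal (5 ^ finrank ℝ E) * K * μ.restrict A (⋃ b ∈ u, closedBall b.1 b.2) := by
        rw [ENNReal.tsum_mul_left, measure_biUnion hcount hdisj fun _ _ => measurableSet_closedBall]
    _ ≤ _ := by
        grw [Set.subset_univ (⋃ b ∈ u, closedBall b.1 b.2), Measure.restrict_apply_univ]

variable {μ}

lemma measure_ball_mul {β : ℝ} (hβ : 0 < β) (y : E) (t : ℝ) :
    μ (ball y (β * t)) = ENNReal.ofReal (β ^ finrank ℝ E) * μ (ball y t) := by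
  rw [Measure.addHaar_ball_mul_of_pos μ y hβ, Measure.addHaar_ball_center μ y]

lemma measure_ball_le_two_mul_of_notMem_largeDensitySet {A : Set E} (hA : MeasurableSet A)
    {β t R : ℝ} (hβ : 1 ≤ β) (ht : 0 < t) (hR : 2 * β * t ≤ R) {x y : E}
    (hxy : x ∈ ball y (β * t))
    (hx : x ∉ largeDensitySet μ A (ENNReal.ofReal (2 * (2 * β) ^ finrank ℝ E)) R) :
    μ (ball y t) ≤ 2 * μ (ball y t ∩ Aᶜ) := by
  have hβ0 : 0 < 2 * β := by positivity
  have hsub : ball y t ⊆ closedBall x (2 * β * t) := by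
    refine ball_subset_closedBall.trans (closedBall_subset_closedBall' ?_)
    rw [mem_ball'] at hxy
    nlinarith
  have hdensity : 2 * μ (ball y t ∩ A) ≤ μ (ball y t) := by
    have hscaled : ENNReal.ofReal ((2 * β) ^ finrank ℝ E) * (2 * μ (ball y t ∩ A)) ≤
        ENNReal.ofReal ((2 * β) ^ finrank ℝ E) * μ (ball y t) := by
      calc _ = ENNReal.ofReal (2 * (2 * β) ^ finrank ℝ E) * μ (ball y t ∩ A) := by
            rw [ENNReal.ofReal_mul zero_le_two, ENNReal.ofReal_ofNat]
            ring
        _ ≤ ENNReal.ofReal (2 * (2 * β) ^ finrank ℝ E) * μ (closedBall x (2 * β * t) ∩ A) := by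
            gcongr
        _ ≤ μ (closedBall x (2 * β * t)) :=
            not_lt.1 fun h => hx ⟨2 * β * t, by positivity, hR, h⟩
        _ = _ := by
            rw [Measure.addHaar_closedBall μ x (by positivity), Measure.addHaar_ball_of_pos μ y ht,
              mul_pow, ENNReal.ofReal_mul (by positivity), mul_assoc]
    rwa [ENNReal.mul_le_mul_iff_right (by simp [hβ0]) ENNReal.ofReal_ne_top] at hscaled
  have hsplit : μ (ball y t) = μ (ball y t ∩ A) + μ (ball y t ∩ Aᶜ) := by
    rw [← Set.sdiff_eq, measure_inter_add_sdiff _ hA]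
  have hfin : μ (ball y t ∩ A) ≠ ⊤ := measure_ne_top_of_subset Set.inter_subset_left
    measure_ball_lt_top.ne
  rw [hsplit, two_mul, ENNReal.add_le_add_iff_left hfin] at hdensity
  rw [hsplit, two_mul]
  gcongr

variable {H : E → ℝ → ℝ≥0∞} {β : ℝ}

lemma setLIntegral_compl_largeDensitySet_coneLIntegral_le (hH : Measurable (Function.uncurry H))
    (hβ : 1 ≤ β) {A : Set E} (hA : MeasurableSet A) :
    ∫⁻ x in (largeDensitySet μ A (ENNReal.ofReal (2 * (2 * β) ^ finrank ℝ E)) (2 * β))ᶜ,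
        coneLIntegral μ β H x ∂μ ≤
      ENNReal.ofReal (2 * β ^ finrank ℝ E) * ∫⁻ x in Aᶜ, coneLIntegral μ 1 H x ∂μ := by
  set D := largeDensitySet μ A (ENNReal.ofReal (2 * (2 * β) ^ finrank ℝ E)) (2 * β)
  simp_rw [setLIntegral_coneLIntegral hH, ← lintegral_const_mul' _ _ ENNReal.ofReal_ne_top, one_mul]
  refine setLIntegral_mono' measurableSet_Ioo fun t ht => lintegral_mono fun y => ?_
  rw [mul_left_comm]
  gcongr
  rcases Set.eq_empty_or_nonempty (ball y (β * t) ∩ Dᶜ) with hempty | ⟨x, hxy, hxD⟩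
  · simp [hempty]
  calc μ (ball y (β * t) ∩ Dᶜ) ≤ μ (ball y (β * t)) := measure_mono Set.inter_subset_left
    _ = ENNReal.ofReal (β ^ finrank ℝ E) * μ (ball y t) := measure_ball_mul (by positivity) y t
    _ ≤ ENNReal.ofReal (β ^ finrank ℝ E) * (2 * μ (ball y t ∩ Aᶜ)) := by
        gcongr
        exact measure_ball_le_two_mul_of_notMem_largeDensitySet hA hβ ht.1
          (mul_le_of_le_one_right (by positivity) ht.2.le) hxy hxD
    _ = ENNReal.ofReal (2 * β ^ finrank ℝ E) * μ (ball y t ∩ Aᶜ) := by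
        rw [ENNReal.ofReal_mul zero_le_two, ENNReal.ofReal_ofNat]
        ring

lemma mul_measure_lt_coneLIntegral_le (hH : Measurable (Function.uncurry H)) (hβ : 1 ≤ β)
    (ε : ℝ≥0∞) :
    ε * μ {x | ε < coneLIntegral μ β H x} ≤
      ENNReal.ofReal (2 * 10 ^ finrank ℝ E * β ^ finrank ℝ E) *
        ∫⁻ x, min (coneLIntegral μ 1 H x) ε ∂μ := by
  set L := {x | ε < coneLIntegral μ β H x}
  set A := {x | ε < coneLIntegral μ 1 H x}
  set D := largeDensitySet μ A (ENNReal.ofReal (2 * (2 * β) ^ finrank ℝ E)) (2 * β)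
  have hA : MeasurableSet A := measurableSet_lt measurable_const (measurable_coneLIntegral hH 1)
  have hL : MeasurableSet L := measurableSet_lt measurable_const (measurable_coneLIntegral hH β)
  have hinside : μ D ≤ ENNReal.ofReal (2 * 10 ^ finrank ℝ E * β ^ finrank ℝ E) * μ A := by
    refine (measure_largeDensitySet_le μ A _ _).trans_eq ?_
    rw [← ENNReal.ofReal_mul (by positivity), show (10 : ℝ) = 5 * 2 by norm_num, mul_pow, mul_pow]
    ring_nf
  have houtside : ε * μ (L ∩ Dᶜ) ≤ ENNReal.ofReal (2 * 10 ^ finrank ℝ E * β ^ finrank ℝ E) *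
      ∫⁻ x in Aᶜ, coneLIntegral μ 1 H x ∂μ := by
    calc ε * μ (L ∩ Dᶜ) ≤ ∫⁻ x in Dᶜ, coneLIntegral μ β H x ∂μ := by
          rw [← Measure.restrict_apply hL]
          exact (mul_le_mul_right (measure_mono fun x hx => (le_of_lt hx : ε ≤ _)) ε).trans
            (mul_meas_ge_le_lintegral (measurable_coneLIntegral hH β) ε)
      _ ≤ ENNReal.ofReal (2 * β ^ finrank ℝ E) * ∫⁻ x in Aᶜ, coneLIntegral μ 1 H x ∂μ :=
          setLIntegral_compl_largeDensitySet_coneLIntegral_le hH hβ hA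
      _ ≤ _ := by
          gcongr
          exact le_mul_of_one_le_right zero_le_two (one_le_pow₀ (by norm_num))
  calc ε * μ L ≤ ε * (μ D + μ (L ∩ Dᶜ)) := by
        gcongr
        rw [← Set.sdiff_eq]
        exact (measure_mono (Set.subset_union_right.trans Set.union_sdiff_self.ge)).trans
          (measure_union_le D (L \ D))
    _ ≤ _ := by
        rw [lintegral_min_const (measurable_coneLIntegral hH 1), mul_add, mul_add, mul_left_comm]
        gcongr

lemma lintegral_coneLIntegral_rpow_le (hH : Measurable (Function.uncurry H)) (hβ : 1 ≤ β)
    {r : ℝ} (hr : 0 < r) (hr1 : r < 1) :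
    ∫⁻ x, coneLIntegral μ β H x ^ r ∂μ ≤
      ENNReal.ofReal (2 * 10 ^ finrank ℝ E * β ^ finrank ℝ E) * ENNReal.ofReal (1 / (1 - r)) *
        ∫⁻ x, coneLIntegral μ 1 H x ^ r ∂μ :=
  lintegral_rpow_le_of_mul_measure_lt_le_s19 (measurable_coneLIntegral hH 1)
    (measurable_coneLIntegral hH β) (fun _ _ => mul_measure_lt_coneLIntegral_le hH hβ _) hr hr1

end Haar

section Euclidean

variable {n : ℕ} {p q : ℝ} {F : EuclideanSpace ℝ (Fin n) → ℝ → ℝ≥0∞}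

-- `Np n p h` unfolds to `eLpNorm' h p volume`, the norm on `ℝ≥0∞` being the identity.
lemma Np_tsum_le (hp : 1 ≤ p) {f : ℕ → EuclideanSpace ℝ (Fin n) → ℝ≥0∞}
    (hf : ∀ k, Measurable (f k)) : Np n p (fun x => ∑' k, f k x) ≤ ∑' k, Np n p (f k) :=
  eLpNorm'_tsum_le hp hf

lemma Np_mono (hp : 0 ≤ p) {g h : EuclideanSpace ℝ (Fin n) → ℝ≥0∞} (hgh : ∀ x, g x ≤ h x) :
    Np n p g ≤ Np n p h := by
  unfold Np
  gcongr with x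
  exact hgh x

lemma Np_const_mul (hp : 0 < p) {c : ℝ≥0∞} (hc : c ≠ ⊤) (h : EuclideanSpace ℝ (Fin n) → ℝ≥0∞) :
    Np n p (fun x => c * h x) = c * Np n p h := by
  simp_rw [Np, ENNReal.mul_rpow_of_nonneg _ _ hp.le]
  rw [lintegral_const_mul' _ _ (ENNReal.rpow_ne_top_of_nonneg hp.le hc),
    ENNReal.mul_rpow_of_nonneg _ _ (by positivity), one_div, ENNReal.rpow_rpow_inv hp.ne']

/-- The density `F(y,t)^q t^{-n-1}` that `SFn` and `GlambdaFn` integrate, up to constants, over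
cones and against a power weight. -/
noncomputable def areaDensity (n : ℕ) (q : ℝ) (F : EuclideanSpace ℝ (Fin n) → ℝ → ℝ≥0∞)
    (y : EuclideanSpace ℝ (Fin n)) (t : ℝ) : ℝ≥0∞ :=
  F y t ^ q * ENNReal.ofReal (t ^ (-(n : ℝ) - 1))

lemma measurable_areaDensity (hF : Measurable (Function.uncurry F)) :
    Measurable (Function.uncurry (areaDensity n q F)) :=
  (hF.pow_const q).mul (f := fun z => Function.uncurry F z ^ q)
    (g := fun z => ENNReal.ofReal (z.2 ^ (-(n : ℝ) - 1))) (by fun_prop)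

lemma ofReal_mul_volume_ball_rpow_ne_top (c : ℝ) (hq : 0 ≤ q) :
    (ENNReal.ofReal c * volume (ball (0 : EuclideanSpace ℝ (Fin n)) 1)) ^ (1 / q) ≠ ⊤ :=
  ENNReal.rpow_ne_top_of_nonneg (by positivity)
    (ENNReal.mul_ne_top ENNReal.ofReal_ne_top measure_ball_lt_top.ne)

lemma ofReal_mul_volume_ball_rpow_ne_zero {c : ℝ} (hc : 0 < c) (hq : 0 ≤ q) :
    (ENNReal.ofReal c * volume (ball (0 : EuclideanSpace ℝ (Fin n)) 1)) ^ (1 / q) ≠ 0 := by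
  have hpos : 0 < ENNReal.ofReal c * volume (ball (0 : EuclideanSpace ℝ (Fin n)) 1) :=
    ENNReal.mul_pos (ENNReal.ofReal_pos.2 hc).ne' (measure_ball_pos _ _ one_pos).ne'
  exact (ENNReal.rpow_pos_of_nonneg hpos (by positivity)).ne'

lemma coneLIntegral_areaDensity_rpow (hq : 0 ≤ q) {β : ℝ} (hβ : 0 < β)
    (x : EuclideanSpace ℝ (Fin n)) :
    coneLIntegral volume β (areaDensity n q F) x ^ (1 / q) =
      (ENNReal.ofReal (β ^ n) * volume (ball (0 : EuclideanSpace ℝ (Fin n)) 1)) ^ (1 / q) *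
        SFn n q β F x := by
  rw [SFn, ← ENNReal.mul_rpow_of_nonneg _ _ (by positivity), ← lintegral_const_mul' _ _
    (ENNReal.mul_ne_top ENNReal.ofReal_ne_top measure_ball_lt_top.ne), coneLIntegral]
  congr 1
  refine setLIntegral_congr_fun measurableSet_Ioo fun t ht => ?_
  have hpow : (β * t) ^ n * t ^ (-(n : ℝ) - 1) = β ^ n * t⁻¹ := by
    rw [Real.rpow_sub_one ht.1.ne', Real.rpow_neg_natCast, mul_pow, zpow_neg, zpow_natCast]
    have := ht.1.ne'
    field_simp
  simp only [areaDensity]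
  rw [lintegral_mul_const' _ _ ENNReal.ofReal_ne_top, ← measure_mul_setLAverage _
    measure_ball_lt_top.ne, Measure.addHaar_ball_of_pos _ _ (mul_pos hβ ht.1),
    finrank_euclideanSpace_fin]
  set m := ⨍⁻ y in ball x (β * t), F y t ^ q ∂volume
  set b := volume (ball (0 : EuclideanSpace ℝ (Fin n)) 1)
  calc ENNReal.ofReal ((β * t) ^ n) * b * m * ENNReal.ofReal (t ^ (-(n : ℝ) - 1))
      = ENNReal.ofReal ((β * t) ^ n * t ^ (-(n : ℝ) - 1)) * b * m := by
        rw [ENNReal.ofReal_mul (pow_nonneg (mul_pos hβ ht.1).le n)]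
        ring
    _ = ENNReal.ofReal (β ^ n) * b * (m * ENNReal.ofReal t⁻¹) := by
        rw [hpow, ENNReal.ofReal_mul (by positivity)]
        ring

lemma measurable_SFn (hF : Measurable (Function.uncurry F)) (hq : 0 ≤ q) {β : ℝ} (hβ : 0 < β) :
    Measurable (SFn n q β F) := by
  have hSFn (x : EuclideanSpace ℝ (Fin n)) : SFn n q β F x =
      ((ENNReal.ofReal (β ^ n) * volume (ball (0 : EuclideanSpace ℝ (Fin n)) 1)) ^ (1 / q))⁻¹ *
        coneLIntegral volume β (areaDensity n q F) x ^ (1 / q) := by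
    rw [coneLIntegral_areaDensity_rpow hq hβ,
      ENNReal.inv_mul_cancel_left (ofReal_mul_volume_ball_rpow_ne_zero (pow_pos hβ n) hq)
        (ofReal_mul_volume_ball_rpow_ne_top _ hq)]
  simp_rw [funext hSFn]
  exact ((measurable_coneLIntegral (measurable_areaDensity hF) β).pow_const _).const_mul _

lemma two_mul_inv_two_pow_rpow_mul_pow (k : ℕ) (lam : ℝ) :
    (2 * ((2 : ℝ) ^ k)⁻¹) ^ (lam * n) * ((2 : ℝ) ^ k) ^ n =
      2 ^ (lam * n) * 2 ^ (-(k : ℝ) * n * (lam - 1)) := by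
  rw [Real.mul_rpow zero_le_two (by positivity), mul_assoc, ← Real.rpow_natCast 2 k,
    ← Real.rpow_neg zero_le_two, ← Real.rpow_mul zero_le_two, ← Real.rpow_mul_natCast zero_le_two,
    ← Real.rpow_add zero_lt_two]
  ring_nf

lemma GlambdaFn_le_tsum_SFn (hF : Measurable (Function.uncurry F)) (hq : 1 ≤ q) {lam : ℝ}
    (hlam : 0 ≤ lam) (x : EuclideanSpace ℝ (Fin n)) :
    GlambdaFn n q lam F x ≤
      (ENNReal.ofReal (2 ^ (lam * n)) * volume (ball (0 : EuclideanSpace ℝ (Fin n)) 1)) ^ (1 / q) *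
        ∑' k : ℕ, ENNReal.ofReal ((2 : ℝ) ^ (-(k : ℝ) * n * (lam - 1) / q)) *
          SFn n q (2 ^ k) F x := by
  have hq0 : 0 < q := zero_lt_one.trans_le hq
  have hweight (t : ℝ) : (∫⁻ y, F y t ^ q * ENNReal.ofReal ((t / (t + dist x y)) ^ (lam * n))) *
      ENNReal.ofReal (t ^ (-(n : ℝ) - 1)) = ∫⁻ y, areaDensity n q F y t *
        ENNReal.ofReal ((t / (t + dist x y)) ^ (lam * n)) := by
    rw [← lintegral_mul_const' _ _ ENNReal.ofReal_ne_top]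
    simp only [areaDensity, mul_right_comm]
  have hterm (k : ℕ) : (ENNReal.ofReal ((2 * ((2 : ℝ) ^ k)⁻¹) ^ (lam * n)) *
      coneLIntegral volume (2 ^ k) (areaDensity n q F) x) ^ (1 / q) =
        (ENNReal.ofReal (2 ^ (lam * n)) *
          volume (ball (0 : EuclideanSpace ℝ (Fin n)) 1)) ^ (1 / q) *
        (ENNReal.ofReal ((2 : ℝ) ^ (-(k : ℝ) * n * (lam - 1) / q)) * SFn n q (2 ^ k) F x) := by
    have hroot : ENNReal.ofReal ((2 : ℝ) ^ (-(k : ℝ) * n * (lam - 1) / q)) =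
        ENNReal.ofReal ((2 : ℝ) ^ (-(k : ℝ) * n * (lam - 1))) ^ (1 / q) := by
      rw [ENNReal.ofReal_rpow_of_nonneg (by positivity) (by positivity),
        ← Real.rpow_mul zero_le_two, mul_one_div]
    rw [hroot, ENNReal.mul_rpow_of_nonneg _ _ (by positivity),
      coneLIntegral_areaDensity_rpow hq0.le (by positivity), ← mul_assoc, ← mul_assoc,
      ← ENNReal.mul_rpow_of_nonneg _ _ (by positivity),
      ← ENNReal.mul_rpow_of_nonneg _ _ (by positivity), ← mul_assoc,
      ← ENNReal.ofReal_mul (by positivity), two_mul_inv_two_pow_rpow_mul_pow,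
      ENNReal.ofReal_mul (by positivity), mul_right_comm]
  calc GlambdaFn n q lam F x
      ≤ (∑' k : ℕ, ENNReal.ofReal ((2 * ((2 : ℝ) ^ k)⁻¹) ^ (lam * n)) *
          coneLIntegral volume (2 ^ k) (areaDensity n q F) x) ^ (1 / q) := by
        simp_rw [GlambdaFn, hweight]
        gcongr
        exact lintegral_cone_weight_le_tsum_coneLIntegral (measurable_areaDensity hF)
          (by positivity) x
    _ ≤ ∑' k : ℕ, (ENNReal.ofReal ((2 * ((2 : ℝ) ^ k)⁻¹) ^ (lam * n)) *
          coneLIntegral volume (2 ^ k) (areaDensity n q F) x) ^ (1 / q) :=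
        rpow_tsum_le_tsum_rpow (by positivity) ((div_le_one hq0).2 hq) _
    _ = _ := by simp_rw [hterm, ENNReal.tsum_mul_left]

lemma Np_GlambdaFn_le_tsum_Np_SFn (hF : Measurable (Function.uncurry F)) (hp : 1 ≤ p) (hq : 1 ≤ q)
    {lam : ℝ} (hlam : 0 ≤ lam) :
    Np n p (GlambdaFn n q lam F) ≤
      (ENNReal.ofReal (2 ^ (lam * n)) * volume (ball (0 : EuclideanSpace ℝ (Fin n)) 1)) ^ (1 / q) *
        ∑' k : ℕ, ENNReal.ofReal ((2 : ℝ) ^ (-(k : ℝ) * n * (lam - 1) / q)) *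
          Np n p (SFn n q (2 ^ k) F) := by
  have hp0 : 0 < p := zero_lt_one.trans_le hp
  have hmeas (k : ℕ) : Measurable fun x =>
      ENNReal.ofReal ((2 : ℝ) ^ (-(k : ℝ) * n * (lam - 1) / q)) * SFn n q (2 ^ k) F x :=
    (measurable_SFn hF (by positivity) (by positivity)).const_mul _
  refine (Np_mono hp0.le (GlambdaFn_le_tsum_SFn hF hq hlam)).trans ?_
  rw [Np_const_mul hp0 (ofReal_mul_volume_ball_rpow_ne_top _ (by positivity))]
  gcongr
  exact (Np_tsum_le hp hmeas).trans_eq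
    (tsum_congr fun k => Np_const_mul hp0 ENNReal.ofReal_ne_top _)

lemma Np_coneLIntegral_rpow_le (hF : Measurable (Function.uncurry F)) (hp : 0 < p) (hpq : p < q)
    {β : ℝ} (hβ : 1 ≤ β) :
    Np n p (fun x => coneLIntegral volume β (areaDensity n q F) x ^ (1 / q)) ≤
      (ENNReal.ofReal (2 * 10 ^ n * β ^ n) * ENNReal.ofReal (1 / (1 - p / q))) ^ (1 / p) *
        Np n p (fun x => coneLIntegral volume 1 (areaDensity n q F) x ^ (1 / q)) := by
  have hq : 0 < q := hp.trans hpq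
  simp_rw [Np, ← ENNReal.rpow_mul, one_div_mul_eq_div]
  rw [← ENNReal.mul_rpow_of_nonneg _ _ (by positivity)]
  gcongr
  simpa only [finrank_euclideanSpace_fin] using lintegral_coneLIntegral_rpow_le (μ := volume)
    (measurable_areaDensity hF) hβ (div_pos hp hq) ((div_lt_one hq).2 hpq)

lemma Np_SFn_le_Np_SFn_one (hF : Measurable (Function.uncurry F)) (hp : 0 < p) (hpq : p < q)
    {β : ℝ} (hβ : 1 ≤ β) :
    Np n p (SFn n q β F) ≤
      (ENNReal.ofReal (2 * 10 ^ n) * ENNReal.ofReal (1 / (1 - p / q))) ^ (1 / p) *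
        ENNReal.ofReal (β ^ (n * (1 / p - 1 / q))) * Np n p (SFn n q 1 F) := by
  have hq : 0 < q := hp.trans hpq
  have hβ0 : 0 < β := zero_lt_one.trans_le hβ
  have hβn : 0 < β ^ n := pow_pos hβ0 n
  have hscale : ENNReal.ofReal (β ^ n) ^ (1 / p) =
      ENNReal.ofReal (β ^ n) ^ (1 / q) * ENNReal.ofReal (β ^ (n * (1 / p - 1 / q))) := by
    rw [ENNReal.ofReal_rpow_of_pos hβn, ENNReal.ofReal_rpow_of_pos hβn,
      ← ENNReal.ofReal_mul (by positivity), Real.rpow_mul hβ0.le, Real.rpow_natCast,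
      ← Real.rpow_add hβn, add_sub_cancel]
  have hcone := Np_coneLIntegral_rpow_le hF hp hpq hβ
  simp_rw [coneLIntegral_areaDensity_rpow hq.le hβ0,
    coneLIntegral_areaDensity_rpow hq.le zero_lt_one] at hcone
  rw [Np_const_mul hp (ofReal_mul_volume_ball_rpow_ne_top _ hq.le),
    Np_const_mul hp (ofReal_mul_volume_ball_rpow_ne_top _ hq.le)] at hcone
  refine (ENNReal.mul_le_mul_iff_right (ofReal_mul_volume_ball_rpow_ne_zero (n := n) hβn hq.le)
    (ofReal_mul_volume_ball_rpow_ne_top _ hq.le)).1 (hcone.trans_eq ?_)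
  rw [ENNReal.ofReal_mul (by positivity), mul_right_comm (ENNReal.ofReal (2 * 10 ^ n)),
    ENNReal.mul_rpow_of_nonneg _ (ENNReal.ofReal (β ^ n)) (by positivity), hscale,
    ENNReal.mul_rpow_of_nonneg (ENNReal.ofReal (β ^ n)) _ (by positivity), one_pow,
    ENNReal.ofReal_one, one_mul]
  ring

lemma GlambdaFn_zero_eq_SFn_one (q lam : ℝ) (F : EuclideanSpace ℝ (Fin 0) → ℝ → ℝ≥0∞) :
    GlambdaFn 0 q lam F = SFn 0 q 1 F := by
  ext x
  unfold GlambdaFn SFn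
  congr 1
  refine setLIntegral_congr_fun measurableSet_Ioo fun t ht => ?_
  have hball : ball x (1 * t) = Set.univ := by
    ext y
    simp [Subsingleton.elim y x, ht.1]
  rw [hball]
  simp [volume_euclideanSpace_eq_dirac, laverage_eq_lintegral, Real.rpow_neg_one]

lemma tsum_two_rpow_ne_top (hn : n ≠ 0) (hq : 0 < q) {lam : ℝ} (hlam : q / p < lam) :
    ∑' k : ℕ, ENNReal.ofReal ((2 : ℝ) ^ (-(k : ℝ) * n * (lam - 1) / q)) *
      ENNReal.ofReal (((2 : ℝ) ^ k) ^ (n * (1 / p - 1 / q))) ≠ ⊤ := by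
  have hratio : (2 : ℝ) ^ (-(n * (lam / q - 1 / p))) < 1 := by
    have hexp : 1 / p < lam / q := by
      rw [lt_div_iff₀ hq, one_div_mul_eq_div]
      exact hlam
    have hn0 : (0 : ℝ) < n := by positivity
    exact Real.rpow_lt_one_of_one_lt_of_neg one_lt_two
      (neg_neg_of_pos (mul_pos hn0 (sub_pos.2 hexp)))
  have hterm (k : ℕ) : ENNReal.ofReal ((2 : ℝ) ^ (-(k : ℝ) * n * (lam - 1) / q)) *
      ENNReal.ofReal (((2 : ℝ) ^ k) ^ (n * (1 / p - 1 / q))) =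
        ENNReal.ofReal (((2 : ℝ) ^ (-(n * (lam / q - 1 / p)))) ^ k) := by
    rw [← ENNReal.ofReal_mul (by positivity), ← Real.rpow_natCast, ← Real.rpow_natCast,
      ← Real.rpow_mul zero_le_two, ← Real.rpow_mul zero_le_two, ← Real.rpow_add zero_lt_two]
    congr 2
    ring
  simp_rw [hterm]
  exact (summable_geometric_of_lt_one (by positivity) hratio).tsum_ofReal_ne_top

lemma exists_Np_GlambdaFn_le_Np_SFn_one (n : ℕ) {lam : ℝ} (hp : 1 ≤ p) (hpq : p < q)
    (hlam : q / p < lam) :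
    ∃ K : ℝ≥0∞, K ≠ ⊤ ∧ ∀ F : EuclideanSpace ℝ (Fin n) → ℝ → ℝ≥0∞,
      Measurable (Function.uncurry F) →
        Np n p (GlambdaFn n q lam F) ≤ K * Np n p (SFn n q 1 F) := by
  have hp0 : 0 < p := zero_lt_one.trans_le hp
  have hq0 : 0 < q := hp0.trans hpq
  have hlam0 : 0 ≤ lam := (div_pos hq0 hp0).le.trans hlam.le
  rcases eq_or_ne n 0 with rfl | hn
  · exact ⟨1, ENNReal.one_ne_top, fun F _ => by rw [GlambdaFn_zero_eq_SFn_one, one_mul]⟩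
  set A := (ENNReal.ofReal (2 ^ (lam * n)) *
    volume (ball (0 : EuclideanSpace ℝ (Fin n)) 1)) ^ (1 / q)
  set M := (ENNReal.ofReal (2 * 10 ^ n) * ENNReal.ofReal (1 / (1 - p / q))) ^ (1 / p)
  set a : ℕ → ℝ≥0∞ := fun k => ENNReal.ofReal ((2 : ℝ) ^ (-(k : ℝ) * n * (lam - 1) / q))
  set b : ℕ → ℝ≥0∞ := fun k => ENNReal.ofReal (((2 : ℝ) ^ k) ^ (n * (1 / p - 1 / q)))
  have hA : A ≠ ⊤ := ofReal_mul_volume_ball_rpow_ne_top _ hq0.le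
  have hM : M ≠ ⊤ := ENNReal.rpow_ne_top_of_nonneg (by positivity)
    (ENNReal.mul_ne_top ENNReal.ofReal_ne_top ENNReal.ofReal_ne_top)
  have hab : ∑' k, a k * b k ≠ ⊤ := tsum_two_rpow_ne_top hn hq0 hlam
  refine ⟨A * (M * ∑' k, a k * b k), ENNReal.mul_ne_top hA (ENNReal.mul_ne_top hM hab),
    fun F hF => ?_⟩
  calc Np n p (GlambdaFn n q lam F) ≤ A * ∑' k, a k * Np n p (SFn n q (2 ^ k) F) :=
        Np_GlambdaFn_le_tsum_Np_SFn hF hp (hp.trans hpq.le) hlam0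
    _ ≤ A * ∑' k, a k * (M * b k * Np n p (SFn n q 1 F)) := by
        gcongr with k
        exact Np_SFn_le_Np_SFn_one hF hp0 hpq (one_le_pow₀ one_le_two)
    _ = A * (M * ∑' k, a k * b k) * Np n p (SFn n q 1 F) := by
        simp_rw [mul_assoc, ← ENNReal.tsum_mul_left, ← ENNReal.tsum_mul_right,
          ← ENNReal.tsum_mul_left, mul_left_comm M, mul_assoc]

end Euclidean

lemma exists_pos_le_ofReal {K : ℝ≥0∞} (hK : K ≠ ⊤) :
    ∃ C : ℝ, 0 < C ∧ K ≤ ENNReal.ofReal C := by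
  refine ⟨K.toReal + 1, by positivity, ?_⟩
  rw [ENNReal.le_ofReal_iff_toReal_le hK (by positivity)]
  exact le_add_of_nonneg_right zero_le_one

theorem Glambda_le_sum_S_general (n : ℕ) (p q lam : ℝ) (hp : 1 ≤ p) (hpq : p < q)
    (hlam : q / p < lam) :
    ∃ C C' : ℝ, 0 < C ∧ 0 < C' ∧
      ∀ F : EuclideanSpace ℝ (Fin n) → ℝ → ℝ≥0∞, Measurable (Function.uncurry F) →
        Np n p (GlambdaFn n q lam F) ≤
            ENNReal.ofReal C *
              ∑' k : ℕ, ENNReal.ofReal ((2:ℝ) ^ (-(k : ℝ) * n * (lam - 1) / q)) *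
                Np n p (SFn n q ((2:ℝ) ^ k) F) ∧
          Np n p (GlambdaFn n q lam F) ≤ ENNReal.ofReal C' * Np n p (SFn n q 1 F) := by
  have hq : 1 ≤ q := hp.trans hpq.le
  have hlam0 : 0 ≤ lam := (by positivity : 0 ≤ q / p).trans hlam.le
  obtain ⟨C, hC, hKC⟩ := exists_pos_le_ofReal (ofReal_mul_volume_ball_rpow_ne_top (n := n)
    (2 ^ (lam * n)) (zero_le_one.trans hq))
  obtain ⟨K, hK, hGS⟩ := exists_Np_GlambdaFn_le_Np_SFn_one n hp hpq hlam
  obtain ⟨C', hC', hKC'⟩ := exists_pos_le_ofReal hK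
  refine ⟨C, C', hC, hC', fun F hF => ⟨?_, ?_⟩⟩
  · exact (Np_GlambdaFn_le_tsum_Np_SFn hF hp hq hlam0).trans (mul_le_mul_left hKC _)
  · exact (hGS F hF).trans (mul_le_mul_left hKC' _)

/-- for `1 < p < q` and `λ > q/p`,
`‖G_λ^*(F)‖_{L^p} ≤ C Σ_k 2^{-kn(λ-1)/q} ‖S_{2^k}(F)‖_{L^p}` and consequently
`‖G_λ^*(F)‖_{L^p} ≤ C' ‖S(F)‖_{L^p}`. -/
theorem Glambda_le_sum_S (n : ℕ) (p q lam : ℝ) (hp : 1 < p) (hq : 1 < q) (hpq : p < q)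
    (hlam : q / p < lam) :
    ∃ C C' : ℝ, 0 < C ∧ 0 < C' ∧
      ∀ F : EuclideanSpace ℝ (Fin n) → ℝ → ℝ≥0∞, Measurable (Function.uncurry F) →
        Np n p (GlambdaFn n q lam F) ≤
            ENNReal.ofReal C *
              ∑' k : ℕ, ENNReal.ofReal ((2:ℝ) ^ (-(k : ℝ) * n * (lam - 1) / q)) *
                Np n p (SFn n q ((2:ℝ) ^ k) F) ∧
          Np n p (GlambdaFn n q lam F) ≤ ENNReal.ofReal C' * Np n p (SFn n q 1 F) :=
  Glambda_le_sum_S_general n p q lam hp.le hpq hlam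
end
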